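/- arXiv:math/0510150 — 2 statements merged into one kernel-verified Lean document; each statement's English description precedes it below -/
import Mathlib

section
/- Suppose the stabilizer G of (K,S) in SO(3) is a cyclic group of order 2. Then there exists an orthonormal basis {e₁,e₂,e₃} of V such that (K,S) is in Z₂-canonical form with parameters (λ,μ,a,b,c,d) satisfying one of the following: (1) λ > 0, μ > 0 and λ ≠ μ; (2) λ = μ > 0 and (b−c)² + (b+c−2a−2d)² ≠ 0; (3) λ = 0, μ > 0 and d ≠ 0; (4) μ = 0, λ > 0 and (b−c)² + d² ≠ 0. Moreover G = {id, P₁}, where P₁ is the rotation by angle π about the axis e₁. -/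
/-!
A stabilizer of order two is generated by an involution `g` of determinant `1`, that is, by a
half-turn (`exists_adapted`). In an orthonormal basis whose first vector spans its axis, invariance
under `g` kills every component of `K` and `S` with an odd number of indices in `{1, 2}`.
Rotating the basis about the axis makes the two diagonal entries of `K (e 0)` on the orthogonal
plane equal (`exists_equal_diag`); apolarity then gives the canonical form (`exists_form`), and
reversing `e 0` and `e 1` makes `lam` and `mu` nonnegative (`exists_form_nonneg`).

The constraints on the parameters hold because each excluded case has a further symmetry outside
`{1, g}`: a half-turn about `e 1` if `lam = d = 0`; a quarter-turn about `e 0` if `mu = d = 0` and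
`b = c`; and, if `lam = mu` and `b = c = a + d`, one of the half-turns of the dihedral symmetry of
the cubic form `2 * lam * (x ^ 3 - 3 * x * w ^ 2)`. If `K = 0`, diagonalizing `S` in an adapted
basis reduces to the first of these cases.
-/

/-!
Setting (affine hypersurfaces admitting a pointwise symmetry, algebraic part):
`V₃ = ℝ³` with its standard inner product `h = ⟪·,·⟫`.  `K` is a symmetric bilinear
map `V₃ × V₃ → V₃` whose cubic form `h(K(X,Y),Z)` is totally symmetric and which
satisfies the apolarity condition (`K_X` trace-free), `S` is an `h`-symmetric
endomorphism.  `stab K S` is the stabilizer of the pair `(K,S)` inside `SO(3)`.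
-/

noncomputable section

open scoped RealInnerProductSpace

/-- The 3-dimensional Euclidean space `ℝ³` with its standard inner product. -/
abbrev V₃ := EuclideanSpace ℝ (Fin 3)

/-- A symmetric bilinear map `K` is admissible (a difference tensor) if the cubic form
`(X,Y,Z) ↦ ⟪K X Y, Z⟫` is totally symmetric and `K_X := K X ·` is trace-free for all `X`. -/
def IsAdmissibleK (K : V₃ →ₗ[ℝ] V₃ →ₗ[ℝ] V₃) : Prop :=
  (∀ X Y, K X Y = K Y X) ∧
  (∀ X Y Z, ⟪K X Y, Z⟫ = ⟪K X Z, Y⟫) ∧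
  (∀ X, LinearMap.trace ℝ V₃ (K X) = 0)

/-- `S` is a symmetric endomorphism with respect to the inner product. -/
def IsSymmEndo (S : V₃ →ₗ[ℝ] V₃) : Prop := ∀ X Y, ⟪S X, Y⟫ = ⟪X, S Y⟫

/-- The stabilizer of the pair `(K,S)` inside `SO(3)`: all orientation-preserving
(i.e. determinant `1`) linear isometries `g` of `ℝ³` with `K(gX,gY) = g(K(X,Y))`
and `S(gX) = g(SX)` for all `X, Y`. -/
def stab (K : V₃ →ₗ[ℝ] V₃ →ₗ[ℝ] V₃) (S : V₃ →ₗ[ℝ] V₃) : Set (V₃ ≃ₗᵢ[ℝ] V₃) :=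
  {g | LinearMap.det (g.toLinearEquiv : V₃ →ₗ[ℝ] V₃) = 1 ∧
    (∀ X Y, K (g X) (g Y) = g (K X Y)) ∧ (∀ X, S (g X) = g (S X))}

/-- The matrix of `g` with respect to the orthonormal basis `e`: column `j` consists of
the coordinates of `g (e j)` in the basis `e`. -/
def matrixOf (e : OrthonormalBasis (Fin 3) ℝ V₃) (g : V₃ ≃ₗᵢ[ℝ] V₃) :
    Matrix (Fin 3) (Fin 3) ℝ :=
  Matrix.of fun i j => ⟪e i, g (e j)⟫

/-- The standard orthonormal basis `{e₁, e₂, e₃}` of `ℝ³`. -/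
def stdB : OrthonormalBasis (Fin 3) ℝ V₃ := EuclideanSpace.basisFun (Fin 3) ℝ

/-- Matrix of the rotation by angle `θ` about the first basis vector `e₁`. -/
def rotMat (θ : ℝ) : Matrix (Fin 3) (Fin 3) ℝ :=
  !![1, 0, 0; 0, Real.cos θ, -Real.sin θ; 0, Real.sin θ, Real.cos θ]

/-- Matrix of the rotation by angle `π` about the axis `cos (θ/2) e₂ + sin (θ/2) e₃`
in the plane orthogonal to `e₁`. -/
def flipMat (θ : ℝ) : Matrix (Fin 3) (Fin 3) ℝ :=
  !![-1, 0, 0; 0, Real.cos θ, Real.sin θ; 0, Real.sin θ, -Real.cos θ]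

/-- The set of all rotations about the axis `e 0` (the first vector of the basis `e`). -/
def rotSet (e : OrthonormalBasis (Fin 3) ℝ V₃) : Set (V₃ ≃ₗᵢ[ℝ] V₃) :=
  {g | ∃ θ : ℝ, matrixOf e g = rotMat θ}

/-- The set of all rotations by angle `π` about axes orthogonal to `e 0`. -/
def flipSet (e : OrthonormalBasis (Fin 3) ℝ V₃) : Set (V₃ ≃ₗᵢ[ℝ] V₃) :=
  {g | ∃ θ : ℝ, matrixOf e g = flipMat θ}

/-- The whole of `SO(3)`, as a set of linear isometries of `ℝ³`. -/
def so3Set : Set (V₃ ≃ₗᵢ[ℝ] V₃) :=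
  {g | LinearMap.det (g.toLinearEquiv : V₃ →ₗ[ℝ] V₃) = 1}

/-- Matrix of `P₁`, the rotation by angle `π` about `e₁`. -/
def P1mat : Matrix (Fin 3) (Fin 3) ℝ := !![1, 0, 0; 0, -1, 0; 0, 0, -1]

/-- Matrix of `P₂`, the rotation by angle `π` about `e₂`. -/
def P2mat : Matrix (Fin 3) (Fin 3) ℝ := !![-1, 0, 0; 0, 1, 0; 0, 0, -1]

/-- Matrix of `P₃`, the rotation by angle `π` about `e₃`. -/
def P3mat : Matrix (Fin 3) (Fin 3) ℝ := !![-1, 0, 0; 0, -1, 0; 0, 0, 1]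

/-- Matrix of `R₁`, the rotation by angle `2π/3` about `e₁`. -/
def R1mat : Matrix (Fin 3) (Fin 3) ℝ :=
  !![1, 0, 0; 0, -(1/2), -(Real.sqrt 3/2); 0, Real.sqrt 3/2, -(1/2)]

/-- Matrix of `R₃`, the rotation by angle `2π/3` about `e₃`. -/
def R3mat : Matrix (Fin 3) (Fin 3) ℝ :=
  !![-(1/2), -(Real.sqrt 3/2), 0; Real.sqrt 3/2, -(1/2), 0; 0, 0, 1]

/-- Matrix of `Q`, the rotation by angle `2π/3` about the axis `e₁ + e₂ + e₃`
(the cyclic permutation `e₁ ↦ e₂ ↦ e₃ ↦ e₁`). -/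
def Qmat : Matrix (Fin 3) (Fin 3) ℝ := !![0, 0, 1; 1, 0, 0; 0, 1, 0]

/-- The matrices of the Klein four-group `{id, P₁, P₂, P₃} ≅ Z₂ × Z₂`. -/
def kleinMatSet : Set (Matrix (Fin 3) (Fin 3) ℝ) := {1, P1mat, P2mat, P3mat}

/-- The matrices of the order-6 group `⟨P₁, R₃⟩ ≅ S₃`. -/
def s3MatSet : Set (Matrix (Fin 3) (Fin 3) ℝ) :=
  {1, R3mat, R3mat * R3mat, P1mat, P1mat * R3mat, R3mat * P1mat}

/-- The matrices of the order-12 group `⟨P₁, P₂, Q⟩ ≅ A₄`. -/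
def a4MatSet : Set (Matrix (Fin 3) (Fin 3) ℝ) :=
  {1, P1mat, P2mat, P3mat, Qmat, Qmat * Qmat,
   P1mat * Qmat, P2mat * Qmat, P3mat * Qmat,
   Qmat * Qmat * P1mat, Qmat * Qmat * P2mat, Qmat * Qmat * P3mat}

/-- The matrices of the order-3 group `{id, R₁, R₁²} ≅ Z₃`. -/
def z3MatSet : Set (Matrix (Fin 3) (Fin 3) ℝ) := {1, R1mat, R1mat * R1mat}

/-- The matrices of the order-2 group `{id, P₁} ≅ Z₂`. -/
def z2MatSet : Set (Matrix (Fin 3) (Fin 3) ℝ) := {1, P1mat}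

/-- The pair `(K,S)` is in `Z₂`-canonical form with parameters `(lam, mu, a, b, c, d)`
with respect to the orthonormal basis `e`. -/
def Z2Form (K : V₃ →ₗ[ℝ] V₃ →ₗ[ℝ] V₃) (S : V₃ →ₗ[ℝ] V₃)
    (e : OrthonormalBasis (Fin 3) ℝ V₃) (lam mu a b c d : ℝ) : Prop :=
  K (e 0) (e 0) = (2*lam) • e 0 ∧
  K (e 0) (e 1) = (-lam) • e 1 + mu • e 2 ∧
  K (e 0) (e 2) = mu • e 1 + (-lam) • e 2 ∧
  K (e 1) (e 1) = (-lam) • e 0 ∧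
  K (e 1) (e 2) = mu • e 0 ∧
  K (e 2) (e 2) = (-lam) • e 0 ∧
  S (e 0) = a • e 0 ∧ S (e 1) = b • e 1 + d • e 2 ∧ S (e 2) = d • e 1 + c • e 2

/-- The pair `(K,S)` is in `Z₃`-canonical form with parameters `(lam, mu, a, b)`
with respect to the orthonormal basis `e`. -/
def Z3Form (K : V₃ →ₗ[ℝ] V₃ →ₗ[ℝ] V₃) (S : V₃ →ₗ[ℝ] V₃)
    (e : OrthonormalBasis (Fin 3) ℝ V₃) (lam mu a b : ℝ) : Prop :=
  K (e 0) (e 0) = (2*lam) • e 0 ∧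
  K (e 0) (e 1) = (-lam) • e 1 ∧
  K (e 0) (e 2) = (-lam) • e 2 ∧
  K (e 1) (e 1) = (-lam) • e 0 + mu • e 1 ∧
  K (e 1) (e 2) = (-mu) • e 2 ∧
  K (e 2) (e 2) = (-lam) • e 0 + (-mu) • e 1 ∧
  S (e 0) = a • e 0 ∧ S (e 1) = b • e 1 ∧ S (e 2) = b • e 2

/-- The pair `(K,S)` is in `SO(2)`-canonical form with parameters `(lam, a, b)`
with respect to the orthonormal basis `e`. -/
def SO2Form (K : V₃ →ₗ[ℝ] V₃ →ₗ[ℝ] V₃) (S : V₃ →ₗ[ℝ] V₃)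
    (e : OrthonormalBasis (Fin 3) ℝ V₃) (lam a b : ℝ) : Prop :=
  K (e 0) (e 0) = (2*lam) • e 0 ∧
  K (e 0) (e 1) = (-lam) • e 1 ∧
  K (e 0) (e 2) = (-lam) • e 2 ∧
  K (e 1) (e 1) = (-lam) • e 0 ∧
  K (e 1) (e 2) = 0 ∧
  K (e 2) (e 2) = (-lam) • e 0 ∧
  S (e 0) = a • e 0 ∧ S (e 1) = b • e 1 ∧ S (e 2) = b • e 2

/-- The pair `(K,S)` is in orthogonal-triple canonical form with parameters `(lam, a, b, c)`
with respect to the orthonormal basis `e`. -/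
def OTForm (K : V₃ →ₗ[ℝ] V₃ →ₗ[ℝ] V₃) (S : V₃ →ₗ[ℝ] V₃)
    (e : OrthonormalBasis (Fin 3) ℝ V₃) (lam a b c : ℝ) : Prop :=
  K (e 0) (e 0) = 0 ∧ K (e 1) (e 1) = 0 ∧ K (e 2) (e 2) = 0 ∧
  K (e 0) (e 1) = lam • e 2 ∧
  K (e 0) (e 2) = lam • e 1 ∧
  K (e 1) (e 2) = lam • e 0 ∧
  S (e 0) = a • e 0 ∧ S (e 1) = b • e 1 ∧ S (e 2) = c • e 2

/-- The pair `(K,S)` is in `S₃`-canonical form with parameters `(lam, a, b)`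
with respect to the orthonormal basis `e`. -/
def S3Form (K : V₃ →ₗ[ℝ] V₃ →ₗ[ℝ] V₃) (S : V₃ →ₗ[ℝ] V₃)
    (e : OrthonormalBasis (Fin 3) ℝ V₃) (lam a b : ℝ) : Prop :=
  K (e 0) (e 0) = lam • e 0 ∧
  K (e 0) (e 1) = (-lam) • e 1 ∧
  K (e 1) (e 1) = (-lam) • e 0 ∧
  K (e 0) (e 2) = 0 ∧ K (e 1) (e 2) = 0 ∧ K (e 2) (e 2) = 0 ∧
  S (e 0) = a • e 0 ∧ S (e 1) = a • e 1 ∧ S (e 2) = b • e 2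

/-! ### Coordinates and isometries in an orthonormal basis -/

/-- Expansion of a vector in an orthonormal basis of `ℝ³`. -/
lemma expand (e : OrthonormalBasis (Fin 3) ℝ V₃) (X : V₃) :
    X = ⟪e 0, X⟫ • e 0 + ⟪e 1, X⟫ • e 1 + ⟪e 2, X⟫ • e 2 := by
  have := e.sum_repr' X
  rw [Fin.sum_univ_three] at this
  exact this.symm

lemma expand_of (e : OrthonormalBasis (Fin 3) ℝ V₃) {X : V₃} {x y z : ℝ}
    (hx : ⟪X, e 0⟫ = x) (hy : ⟪X, e 1⟫ = y) (hz : ⟪X, e 2⟫ = z) :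
    X = x • e 0 + y • e 1 + z • e 2 := by
  rw [← hx, ← hy, ← hz, real_inner_comm _ X, real_inner_comm _ X, real_inner_comm _ X]
  exact expand e X

/-- An isometry with prescribed orthogonal matrix in the orthonormal basis `e`. -/
lemma exists_isom (e : OrthonormalBasis (Fin 3) ℝ V₃) (M : Matrix (Fin 3) (Fin 3) ℝ)
    (hM : M.transpose * M = 1) :
    ∃ T : V₃ ≃ₗᵢ[ℝ] V₃, (∀ j, T (e j) = M 0 j • e 0 + M 1 j • e 1 + M 2 j • e 2) ∧
      LinearMap.det (T.toLinearEquiv : V₃ →ₗ[ℝ] V₃) = M.det := by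
  have happ : ∀ j, Matrix.toLin e.toBasis e.toBasis M (e j)
      = M 0 j • e 0 + M 1 j • e 1 + M 2 j • e 2 := by
    intro j
    have := Matrix.toLin_self e.toBasis e.toBasis M j
    simpa [Fin.sum_univ_three] using this
  have hon : Orthonormal ℝ (Matrix.toLin e.toBasis e.toBasis M ∘ e.toBasis) := by
    rw [orthonormal_iff_ite]
    intro i j
    have h := congrFun (congrFun hM i) j
    simp only [Matrix.mul_apply, Fin.sum_univ_three, Matrix.transpose_apply,
      Matrix.one_apply] at h
    simp only [Function.comp_apply, OrthonormalBasis.coe_toBasis, happ, inner_add_left,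
      inner_add_right, real_inner_smul_left, real_inner_smul_right,
      OrthonormalBasis.inner_eq_ite]
    rw [← h]
    simp
    ring
  have heon : Orthonormal ℝ e.toBasis := by simp
  refine ⟨((Matrix.toLin e.toBasis e.toBasis M).isometryOfOrthonormal heon
    hon).toLinearIsometryEquiv rfl, fun j => ?_, ?_⟩
  · exact happ j
  · exact LinearMap.det_toLin e.toBasis M

/-- Invariance of `(K,S)` under `T` only has to be checked on a basis. -/
lemma mem_stab_of_basis {K : V₃ →ₗ[ℝ] V₃ →ₗ[ℝ] V₃} {S : V₃ →ₗ[ℝ] V₃}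
    (hK : IsAdmissibleK K) (e : OrthonormalBasis (Fin 3) ℝ V₃) (T : V₃ ≃ₗᵢ[ℝ] V₃)
    (hdet : LinearMap.det (T.toLinearEquiv : V₃ →ₗ[ℝ] V₃) = 1)
    (h00 : K (T (e 0)) (T (e 0)) = T (K (e 0) (e 0)))
    (h01 : K (T (e 0)) (T (e 1)) = T (K (e 0) (e 1)))
    (h02 : K (T (e 0)) (T (e 2)) = T (K (e 0) (e 2)))
    (h11 : K (T (e 1)) (T (e 1)) = T (K (e 1) (e 1)))
    (h12 : K (T (e 1)) (T (e 2)) = T (K (e 1) (e 2)))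
    (h22 : K (T (e 2)) (T (e 2)) = T (K (e 2) (e 2)))
    (hS : ∀ i, S (T (e i)) = T (S (e i))) : T ∈ stab K S := by
  have h10 : K (T (e 1)) (T (e 0)) = T (K (e 1) (e 0)) := by rw [hK.1, h01, hK.1 (e 0)]
  have h20 : K (T (e 2)) (T (e 0)) = T (K (e 2) (e 0)) := by rw [hK.1, h02, hK.1 (e 0)]
  have h21 : K (T (e 2)) (T (e 1)) = T (K (e 2) (e 1)) := by rw [hK.1, h12, hK.1 (e 1)]
  refine ⟨hdet, fun X Y => ?_, fun X => ?_⟩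
  · rw [expand e X, expand e Y]
    simp only [map_add, map_smul, LinearMap.add_apply, LinearMap.smul_apply,
      h00, h01, h02, h10, h11, h12, h20, h21, h22]
  · rw [expand e X]
    simp only [map_add, map_smul, hS]

/-! ### Bases adapted to a half-turn -/

/-- The orthonormal basis `e` is adapted to `g`: in it, `g` is the rotation by `π` about `e 0`. -/
def Adapted (g : V₃ ≃ₗᵢ[ℝ] V₃) (e : OrthonormalBasis (Fin 3) ℝ V₃) : Prop :=
  g (e 0) = e 0 ∧ g (e 1) = -e 1 ∧ g (e 2) = -e 2

/-- An involution in `SO(3)` other than the identity is a half-turn. If it had no nonzero fixed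
vector it would be `-id`, of determinant `-1`; on the plane orthogonal to a fixed unit vector its
matrix is orthogonal, symmetric and of determinant `1`, hence `±id`. -/
lemma exists_adapted (g : V₃ ≃ₗᵢ[ℝ] V₃) (hg1 : g ≠ 1) (hgg : ∀ x, g (g x) = x)
    (hdet : LinearMap.det (g.toLinearEquiv : V₃ →ₗ[ℝ] V₃) = 1) :
    ∃ e, Adapted g e := by
  obtain ⟨w, hw0, hw⟩ : ∃ w : V₃, w ≠ 0 ∧ g w = w := by
    by_contra! hno
    have hneg : (g.toLinearEquiv : V₃ →ₗ[ℝ] V₃) = (-1 : ℝ) • LinearMap.id := by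
      ext1 x
      by_contra hx
      refine hno (x + g x) (fun h0 => hx ?_) ?_
      · have : g x = -x := by rw [eq_neg_iff_add_eq_zero, add_comm]; exact h0
        simpa using this
      · rw [map_add, hgg, add_comm]
    rw [hneg, LinearMap.det_smul] at hdet
    norm_num at hdet
  have hon : Orthonormal ℝ (({0} : Set (Fin 3)).domRestrict fun _ => ‖w‖⁻¹ • w) := by
    refine ⟨fun i => ?_, fun i j hij => absurd (Subsingleton.elim i j) hij⟩
    change ‖‖w‖⁻¹ • w‖ = 1
    simp [norm_smul, hw0]
  obtain ⟨e, he⟩ := hon.exists_orthonormalBasis_extension_of_card_eq (by simp)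
  have he0 : g (e 0) = e 0 := by
    rw [he 0 rfl, map_smul, hw]
  refine ⟨e, he0, ?_⟩
  have hi := fun x y => g.inner_map_map x y
  have hsym : ∀ x y, ⟪x, g y⟫ = ⟪y, g x⟫ := by
    intro x y
    rw [← hi, hgg, real_inner_comm]
  have o00 : ⟪e 0, g (e 0)⟫ = (1 : ℝ) := by rw [he0]; simp
  have o01 : ⟪e 0, g (e 1)⟫ = (0 : ℝ) := by rw [hsym, he0]; simp
  have o02 : ⟪e 0, g (e 2)⟫ = (0 : ℝ) := by rw [hsym, he0]; simp
  have o10 : ⟪e 1, g (e 0)⟫ = (0 : ℝ) := by rw [he0]; simp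
  have o20 : ⟪e 2, g (e 0)⟫ = (0 : ℝ) := by rw [he0]; simp
  have o21 : ⟪e 2, g (e 1)⟫ = ⟪e 1, g (e 2)⟫ := hsym _ _
  have x1 := expand e (g (e 1))
  have x2 := expand e (g (e 2))
  rw [o01, o21] at x1
  rw [o02] at x2
  have hd := hdet
  rw [← LinearMap.det_toMatrix e.toBasis, Matrix.det_fin_three] at hd
  simp only [LinearMap.toMatrix_apply, OrthonormalBasis.coe_toBasis,
    OrthonormalBasis.coe_toBasis_repr_apply, OrthonormalBasis.repr_apply_apply,
    LinearEquiv.coe_coe, LinearIsometryEquiv.coe_toLinearEquiv,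
    o00, o01, o02, o10, o20, o21] at hd
  have n1 : ⟪g (e 1), g (e 1)⟫ = (1 : ℝ) := by rw [hi]; simp
  have n2 : ⟪g (e 2), g (e 2)⟫ = (1 : ℝ) := by rw [hi]; simp
  generalize ⟪e 1, g (e 1)⟫ = p at x1 x2 hd
  generalize ⟪e 1, g (e 2)⟫ = q at x1 x2 hd
  generalize ⟪e 2, g (e 2)⟫ = s at x1 x2 hd
  rw [x1] at n1
  rw [x2] at n2
  simp only [inner_add_left, inner_add_right, real_inner_smul_left, real_inner_smul_right,
    OrthonormalBasis.inner_eq_ite] at n1 n2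
  simp at n1 n2
  have hps : (p - s) ^ 2 + 4 * q ^ 2 = 0 := by nlinarith
  have hq : q = 0 := by nlinarith [sq_nonneg (p - s), sq_nonneg q]
  have hs : p = s := by nlinarith [sq_nonneg (p - s), sq_nonneg q]
  subst hs hq
  have hp : (p - 1) * (p + 1) = 0 := by linarith
  rcases mul_eq_zero.1 hp with h | h
  · exfalso
    have hp1 : p = 1 := by linarith
    apply hg1
    ext1 x
    rw [expand e x]
    simp only [map_add, map_smul]
    rw [he0, x1, x2, hp1]
    simp
  · have hp1 : p = -1 := by linarith
    rw [x1, x2, hp1]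
    simp

/-- Rotating an adapted basis about its axis `e 0` keeps it adapted. -/
lemma exists_rotate {g : V₃ ≃ₗᵢ[ℝ] V₃} {e : OrthonormalBasis (Fin 3) ℝ V₃} (he : Adapted g e)
    (θ : ℝ) : ∃ e' : OrthonormalBasis (Fin 3) ℝ V₃, Adapted g e' ∧ e' 0 = e 0 ∧
      e' 1 = Real.cos θ • e 1 + Real.sin θ • e 2 ∧
      e' 2 = -Real.sin θ • e 1 + Real.cos θ • e 2 := by
  have hcs := Real.sin_sq_add_cos_sq θ
  obtain ⟨T, hT, -⟩ := exists_isom e (rotMat θ) (by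
    ext i j
    fin_cases i <;> fin_cases j <;>
      simp [rotMat, Matrix.mul_apply, Fin.sum_univ_three] <;> linarith)
  have h0 := hT 0
  have h1 := hT 1
  have h2 := hT 2
  simp [rotMat] at h0 h1 h2
  refine ⟨e.map T, ⟨?_, ?_, ?_⟩, ?_, ?_, ?_⟩ <;>
    simp only [OrthonormalBasis.map_apply, h0, h1, h2, map_add, map_smul, map_neg,
      he.1, he.2.1, he.2.2] <;> module

/-- Changing signs of the first two vectors of an adapted basis keeps it adapted. -/
lemma exists_signs {g : V₃ ≃ₗᵢ[ℝ] V₃} {e : OrthonormalBasis (Fin 3) ℝ V₃} (he : Adapted g e)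
    (s t : ℝ) (hs : s * s = 1) (ht : t * t = 1) :
    ∃ e' : OrthonormalBasis (Fin 3) ℝ V₃, Adapted g e' ∧ e' 0 = s • e 0 ∧
      e' 1 = t • e 1 ∧ e' 2 = e 2 := by
  obtain ⟨T, hT, -⟩ := exists_isom e !![s, 0, 0; 0, t, 0; 0, 0, 1] (by
    ext i j
    fin_cases i <;> fin_cases j <;>
      simp [Matrix.mul_apply, Fin.sum_univ_three, hs, ht])
  have h0 := hT 0
  have h1 := hT 1
  have h2 := hT 2
  simp at h0 h1 h2
  refine ⟨e.map T, ⟨?_, ?_, ?_⟩, ?_, ?_, ?_⟩ <;>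
    simp only [OrthonormalBasis.map_apply, h0, h1, h2, map_smul,
      he.1, he.2.1, he.2.2] <;> module

/-- A suitable angle `θ` is half the argument of `B - iA`. -/
lemma exists_angle (A B : ℝ) : ∃ θ : ℝ,
    A * (Real.cos θ ^ 2 - Real.sin θ ^ 2) + B * (2 * Real.sin θ * Real.cos θ) = 0 := by
  let z : ℂ := ⟨B, -A⟩
  refine ⟨z.arg / 2, ?_⟩
  rw [← Real.cos_two_mul', ← Real.sin_two_mul, mul_div_cancel₀ _ two_ne_zero]
  have hc := Complex.norm_mul_cos_arg z
  have hs := Complex.norm_mul_sin_arg z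
  have hB : B = ‖z‖ * Real.cos z.arg := hc.symm
  have hA : A = -(‖z‖ * Real.sin z.arg) := by rw [hs]; simp [z]
  linear_combination Real.cos z.arg * hA + Real.sin z.arg * hB

/-- The matrix of a symmetric `A` on the plane orthogonal to `e 0` has equal diagonal entries in
a suitable adapted basis. -/
lemma exists_equal_diag {g : V₃ ≃ₗᵢ[ℝ] V₃} {e : OrthonormalBasis (Fin 3) ℝ V₃}
    (he : Adapted g e) (A : V₃ →ₗ[ℝ] V₃) (hA : ∀ X Y, ⟪A X, Y⟫ = ⟪A Y, X⟫) :
    ∃ e' : OrthonormalBasis (Fin 3) ℝ V₃, Adapted g e' ∧ e' 0 = e 0 ∧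
      ⟪A (e' 1), e' 1⟫ = ⟪A (e' 2), e' 2⟫ := by
  obtain ⟨θ, hθ⟩ := exists_angle (⟪A (e 1), e 1⟫ - ⟪A (e 2), e 2⟫) (2 * ⟪A (e 1), e 2⟫)
  obtain ⟨e', h, h0, h1, h2⟩ := exists_rotate he θ
  refine ⟨e', h, h0, ?_⟩
  have h21 := hA (e 2) (e 1)
  simp only [h1, h2, map_add, map_smul, inner_add_left, inner_add_right,
    real_inner_smul_left, real_inner_smul_right, h21]
  linear_combination hθ

/-- The matrix of a symmetric `A` on the plane orthogonal to `e 0` is diagonal in a suitable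
adapted basis. -/
lemma exists_offdiag_zero {g : V₃ ≃ₗᵢ[ℝ] V₃} {e : OrthonormalBasis (Fin 3) ℝ V₃}
    (he : Adapted g e) (A : V₃ →ₗ[ℝ] V₃) (hA : ∀ X Y, ⟪A X, Y⟫ = ⟪A Y, X⟫) :
    ∃ e' : OrthonormalBasis (Fin 3) ℝ V₃, Adapted g e' ∧ e' 0 = e 0 ∧
      ⟪A (e' 1), e' 2⟫ = 0 := by
  obtain ⟨θ, hθ⟩ := exists_angle (2 * ⟪A (e 1), e 2⟫) (⟪A (e 2), e 2⟫ - ⟪A (e 1), e 1⟫)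
  obtain ⟨e', h, h0, h1, h2⟩ := exists_rotate he θ
  refine ⟨e', h, h0, ?_⟩
  have h21 := hA (e 2) (e 1)
  simp only [h1, h2, map_add, map_smul, inner_add_left, inner_add_right,
    real_inner_smul_left, real_inner_smul_right, h21]
  linear_combination hθ / 2

/-! ### The canonical form -/

/-- In a basis adapted to a half-turn of the stabilizer, all components of `K` and `S` with an odd
number of indices in `{1, 2}` vanish; equality of the two diagonal entries of `K (e 0)` together
with apolarity then gives the canonical form. -/
lemma exists_form {K : V₃ →ₗ[ℝ] V₃ →ₗ[ℝ] V₃} {S : V₃ →ₗ[ℝ] V₃}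
    (hK : IsAdmissibleK K) (hS : IsSymmEndo S) {g : V₃ ≃ₗᵢ[ℝ] V₃} (hg : g ∈ stab K S)
    {e : OrthonormalBasis (Fin 3) ℝ V₃} (he : Adapted g e)
    (hd : ⟪K (e 0) (e 1), e 1⟫ = ⟪K (e 0) (e 2), e 2⟫) :
    ∃ lam mu a b c d, Z2Form K S e lam mu a b c d ∧ d = ⟪S (e 1), e 2⟫ := by
  obtain ⟨hKs, hKt, hKtr⟩ := hK
  obtain ⟨-, hgK, hgS⟩ := hg
  obtain ⟨g0, g1, g2⟩ := he
  have hi : ∀ x y, ⟪g x, g y⟫ = ⟪x, y⟫ := fun x y => g.inner_map_map x y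
  have kinv : ∀ x y z, ⟪K (g x) (g y), g z⟫ = ⟪K x y, z⟫ := by
    intro x y z; rw [hgK, hi]
  have sinv : ∀ x y, ⟪S (g x), g y⟫ = ⟪S x, y⟫ := by
    intro x y; rw [hgS, hi]
  have k001 := kinv (e 0) (e 0) (e 1)
  have k002 := kinv (e 0) (e 0) (e 2)
  have k111 := kinv (e 1) (e 1) (e 1)
  have k112 := kinv (e 1) (e 1) (e 2)
  have k122 := kinv (e 1) (e 2) (e 2)
  have k222 := kinv (e 2) (e 2) (e 2)
  have s01 := sinv (e 0) (e 1)
  have s02 := sinv (e 0) (e 2)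
  simp only [g0, g1, g2, map_neg, LinearMap.neg_apply, inner_neg_right,
    neg_neg] at k001 k002 k111 k112 k122 k222 s01 s02
  have tr0 := hKtr (e 0)
  rw [LinearMap.trace_eq_sum_inner _ e, Fin.sum_univ_three] at tr0
  rw [real_inner_comm (K (e 0) (e 0)), real_inner_comm (K (e 0) (e 1)),
    real_inner_comm (K (e 0) (e 2))] at tr0
  have k010 := hKt (e 0) (e 1) (e 0)
  have k020 := hKt (e 0) (e 2) (e 0)
  have k021 := hKt (e 0) (e 2) (e 1)
  have k110 := hKt (e 1) (e 1) (e 0)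
  have k120 := hKt (e 1) (e 2) (e 0)
  have k121 := hKt (e 1) (e 2) (e 1)
  have k220 := hKt (e 2) (e 2) (e 0)
  have k221 := hKt (e 2) (e 2) (e 1)
  rw [hKs (e 1) (e 0)] at k110 k120
  rw [hKs (e 2) (e 0)] at k220
  rw [hKs (e 2) (e 1)] at k221
  have s10 := hS (e 1) (e 0)
  have s20 := hS (e 2) (e 0)
  have s21 := hS (e 2) (e 1)
  rw [real_inner_comm (S (e 0))] at s10 s20
  rw [real_inner_comm (S (e 1))] at s21
  refine ⟨-⟪K (e 0) (e 1), e 1⟫, ⟪K (e 0) (e 1), e 2⟫, ⟪S (e 0), e 0⟫, ⟪S (e 1), e 1⟫,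
    ⟪S (e 2), e 2⟫, ⟪S (e 1), e 2⟫, ⟨?_, ?_, ?_, ?_, ?_, ?_, ?_, ?_, ?_⟩, rfl⟩
  · exact (expand_of e (x := 2 * -⟪K (e 0) (e 1), e 1⟫) (y := 0) (z := 0)
      (by linarith) (by linarith) (by linarith)).trans (by module)
  · exact (expand_of e (x := 0) (y := ⟪K (e 0) (e 1), e 1⟫) (z := ⟪K (e 0) (e 1), e 2⟫)
      (by linarith) (by linarith) (by linarith)).trans (by module)
  · exact (expand_of e (x := 0) (y := ⟪K (e 0) (e 1), e 2⟫) (z := ⟪K (e 0) (e 1), e 1⟫)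
      (by linarith) (by linarith) (by linarith)).trans (by module)
  · exact (expand_of e (x := ⟪K (e 0) (e 1), e 1⟫) (y := 0) (z := 0)
      (by linarith) (by linarith) (by linarith)).trans (by module)
  · exact (expand_of e (x := ⟪K (e 0) (e 1), e 2⟫) (y := 0) (z := 0)
      (by linarith) (by linarith) (by linarith)).trans (by module)
  · exact (expand_of e (x := ⟪K (e 0) (e 1), e 1⟫) (y := 0) (z := 0)
      (by linarith) (by linarith) (by linarith)).trans (by module)
  · exact (expand_of e (x := ⟪S (e 0), e 0⟫) (y := 0) (z := 0)
      (by linarith) (by linarith) (by linarith)).trans (by module)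
  · exact (expand_of e (x := 0) (y := ⟪S (e 1), e 1⟫) (z := ⟪S (e 1), e 2⟫)
      (by linarith) (by linarith) (by linarith)).trans (by module)
  · exact (expand_of e (x := 0) (y := ⟪S (e 1), e 2⟫) (z := ⟪S (e 2), e 2⟫)
      (by linarith) (by linarith) (by linarith)).trans (by module)

/-- Reversing `e 0` and `e 1` changes the signs of the parameters; both `lam` and `mu` can be made
nonnegative. -/
lemma exists_form_nonneg {K : V₃ →ₗ[ℝ] V₃ →ₗ[ℝ] V₃} {S : V₃ →ₗ[ℝ] V₃}
    {g : V₃ ≃ₗᵢ[ℝ] V₃} {e : OrthonormalBasis (Fin 3) ℝ V₃} (he : Adapted g e)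
    {lam mu a b c d : ℝ} (h : Z2Form K S e lam mu a b c d) :
    ∃ e' : OrthonormalBasis (Fin 3) ℝ V₃, Adapted g e' ∧ ∃ lam' mu' d' : ℝ, 0 ≤ lam' ∧ 0 ≤ mu' ∧
      Z2Form K S e' lam' mu' a b c d' := by
  obtain ⟨s, hs, hs0⟩ : ∃ s : ℝ, s * s = 1 ∧ 0 ≤ s * lam := by
    rcases le_total 0 lam with h | h
    · exact ⟨1, by norm_num, by linarith⟩
    · exact ⟨-1, by norm_num, by linarith⟩
  obtain ⟨t, ht, ht0⟩ : ∃ t : ℝ, t * t = 1 ∧ 0 ≤ s * t * mu := by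
    rcases le_total 0 (s * mu) with h | h
    · exact ⟨1, by norm_num, by linarith⟩
    · exact ⟨-1, by norm_num, by linarith⟩
  obtain ⟨e', he', h0, h1, h2⟩ := exists_signs he s t hs ht
  refine ⟨e', he', s * lam, s * t * mu, t * d, hs0, ht0, ?_⟩
  obtain ⟨k00, k01, k02, k11, k12, k22, s0, s1, s2⟩ := h
  refine ⟨?_, ?_, ?_, ?_, ?_, ?_, ?_, ?_, ?_⟩ <;>
    simp only [h0, h1, h2, map_smul, LinearMap.smul_apply, k00, k01, k02, k11, k12, k22,
      s0, s1, s2] <;> match_scalars <;> grind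

/-! ### Additional symmetries in the excluded cases -/

/-- If `lam = d = 0`, the half-turn about `e 1` preserves `(K,S)`. -/
lemma exists_stab_lam_zero {K : V₃ →ₗ[ℝ] V₃ →ₗ[ℝ] V₃} {S : V₃ →ₗ[ℝ] V₃}
    (hK : IsAdmissibleK K) {e : OrthonormalBasis (Fin 3) ℝ V₃}
    {mu a b c : ℝ} (h : Z2Form K S e 0 mu a b c 0) :
    ∃ T ∈ stab K S, T (e 0) ≠ e 0 := by
  obtain ⟨k00, k01, k02, k11, k12, k22, s0, s1, s2⟩ := h
  obtain ⟨T, hT, hdet⟩ := exists_isom e P2mat (by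
    ext i j
    fin_cases i <;> fin_cases j <;> simp [P2mat, Matrix.mul_apply, Fin.sum_univ_three])
  have h0 := hT 0
  have h1 := hT 1
  have h2 := hT 2
  simp [P2mat] at h0 h1 h2
  refine ⟨T, mem_stab_of_basis hK e T (hdet.trans ?_) ?_ ?_ ?_ ?_ ?_ ?_ ?_, fun h => ?_⟩
  · simp [P2mat, Matrix.det_fin_three]
  pick_goal 7
  · intro i
    fin_cases i <;> simp [h0, h1, h2, s0, s1, s2]
  pick_goal 7
  · have := congrArg (fun x => ⟪e 0, x⟫) (h0.symm.trans h)
    simp at this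
    linarith
  all_goals simp [h0, h1, h2, k00, k01, k02, k11, k12, k22]

/-- If `mu = d = 0` and `b = c`, the quarter-turn about `e 0` preserves `(K,S)`. -/
lemma exists_stab_mu_zero {K : V₃ →ₗ[ℝ] V₃ →ₗ[ℝ] V₃} {S : V₃ →ₗ[ℝ] V₃}
    (hK : IsAdmissibleK K) {e : OrthonormalBasis (Fin 3) ℝ V₃}
    {lam a b : ℝ} (h : Z2Form K S e lam 0 a b b 0) :
    ∃ T ∈ stab K S, T (e 1) = e 2 := by
  obtain ⟨k00, k01, k02, k11, k12, k22, s0, s1, s2⟩ := h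
  have k21 : K (e 2) (e 1) = (0 : ℝ) • e 0 := by rw [hK.1, k12]
  obtain ⟨T, hT, hdet⟩ := exists_isom e !![1, 0, 0; 0, 0, -1; 0, 1, 0] (by
    ext i j
    fin_cases i <;> fin_cases j <;> simp [Matrix.mul_apply, Fin.sum_univ_three])
  have h0 := hT 0
  have h1 := hT 1
  have h2 := hT 2
  simp at h0 h1 h2
  refine ⟨T, mem_stab_of_basis hK e T (hdet.trans ?_) ?_ ?_ ?_ ?_ ?_ ?_ ?_, h1⟩
  · simp [Matrix.det_fin_three]
  pick_goal 7
  · intro i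
    fin_cases i <;> simp [h0, h1, h2, s0, s1, s2]
  all_goals simp [h0, h1, h2, k00, k01, k02, k11, k12, k21, k22]

/-- If `lam = mu`, the cubic form is `2 * lam * (x ^ 3 - 3 * x * w ^ 2)` with `w` the coordinate
along `(e 1 - e 2) / √2`, so `K` is invariant under the half-turn about the axis in the plane of
`x` and `w` making the angle `2π/3` with `e 0`. When `b = c = a + d`, the endomorphism `S` is a
multiple of the identity on that plane and is preserved too. -/
lemma exists_stab_lam_eq_mu {K : V₃ →ₗ[ℝ] V₃ →ₗ[ℝ] V₃} {S : V₃ →ₗ[ℝ] V₃}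
    (hK : IsAdmissibleK K) {e : OrthonormalBasis (Fin 3) ℝ V₃}
    {lam a d : ℝ} (h : Z2Form K S e lam lam a (a + d) (a + d) d) :
    ∃ T ∈ stab K S, T (e 0) ≠ e 0 := by
  obtain ⟨k00, k01, k02, k11, k12, k22, s0, s1, s2⟩ := h
  have k10 : K (e 1) (e 0) = (-lam) • e 1 + lam • e 2 := by rw [hK.1, k01]
  have k20 : K (e 2) (e 0) = lam • e 1 + (-lam) • e 2 := by rw [hK.1, k02]
  have k21 : K (e 2) (e 1) = lam • e 0 := by rw [hK.1, k12]
  -- With `t ^ 2 = 3 / 8`, the axis is spanned by the unit vector `-e 0 / 2 + t • (e 1 - e 2)`.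
  obtain ⟨t, ht⟩ : ∃ t : ℝ, t ^ 2 = 3 / 8 := ⟨√(3 / 8), Real.sq_sqrt (by norm_num)⟩
  obtain ⟨T, hT, hdet⟩ := exists_isom e
    !![-(1/2), -t, t; -t, -(1/4), -(3/4); t, -(3/4), -(1/4)] (by
    ext i j
    fin_cases i <;> fin_cases j <;> simp [Matrix.mul_apply, Fin.sum_univ_three] <;>
      linarith)
  have h0 := hT 0
  have h1 := hT 1
  have h2 := hT 2
  simp only [Matrix.of_apply, Matrix.cons_val] at h0 h1 h2
  refine ⟨T, mem_stab_of_basis hK e T (hdet.trans ?_) ?_ ?_ ?_ ?_ ?_ ?_ ?_, fun h => ?_⟩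
  · simp [Matrix.det_fin_three]
    linarith
  pick_goal 7
  · intro i
    fin_cases i <;> simp only [Fin.zero_eta, Fin.mk_one, Fin.reduceFinMk, h0, h1, h2, map_add,
      map_smul, s0, s1, s2] <;> match_scalars <;> ring
  pick_goal 7
  · have := congrArg (fun x => ⟪e 0, x⟫) (h0.symm.trans h)
    simp only [inner_add_right, real_inner_smul_right, OrthonormalBasis.inner_eq_ite] at this
    simp at this
    linarith
  all_goals
    simp only [h0, h1, h2, map_add, map_smul, LinearMap.add_apply, LinearMap.smul_apply,
      k00, k01, k02, k10, k11, k12, k20, k21, k22]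
    match_scalars <;> grind

/-! ### Matrices of isometries -/

lemma matrixOf_injective (e : OrthonormalBasis (Fin 3) ℝ V₃) :
    Function.Injective (matrixOf e) := by
  intro f g h
  have hj : ∀ j, f (e j) = g (e j) := by
    intro j
    have hij : ∀ i, ⟪e i, f (e j)⟫ = ⟪e i, g (e j)⟫ := fun i => congrFun (congrFun h i) j
    rw [expand e (f (e j)), hij 0, hij 1, hij 2, ← expand]
  ext1 x
  rw [expand e x]
  simp only [map_add, map_smul, hj]

lemma matrixOf_one (e : OrthonormalBasis (Fin 3) ℝ V₃) : matrixOf e 1 = 1 := by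
  ext i j
  simp [matrixOf, Matrix.one_apply, OrthonormalBasis.inner_eq_ite]

lemma matrixOf_adapted {g : V₃ ≃ₗᵢ[ℝ] V₃} {e : OrthonormalBasis (Fin 3) ℝ V₃}
    (he : Adapted g e) : matrixOf e g = P1mat := by
  obtain ⟨g0, g1, g2⟩ := he
  ext i j
  fin_cases i <;> fin_cases j <;> simp [matrixOf, P1mat, g0, g1, g2]

/-- Lemma 2.1: if the stabilizer of `(K,S)` in `SO(3)` is a cyclic group
of order `2`, then in a suitable orthonormal basis `(K,S)` is in `Z₂`-canonical form with
the listed parameter constraints, and the stabilizer is `{id, P₁}`. -/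
theorem statement_1 (K : V₃ →ₗ[ℝ] V₃ →ₗ[ℝ] V₃) (S : V₃ →ₗ[ℝ] V₃)
    (hK : IsAdmissibleK K) (hS : IsSymmEndo S)
    (hcyc : ∃ g : V₃ ≃ₗᵢ[ℝ] V₃, g ≠ 1 ∧ g * g = 1 ∧
      stab K S = {1, g}) :
    ∃ e : OrthonormalBasis (Fin 3) ℝ V₃, ∃ lam mu a b c d : ℝ,
      Z2Form K S e lam mu a b c d ∧
      ((0 < lam ∧ 0 < mu ∧ lam ≠ mu) ∨
       (lam = mu ∧ 0 < lam ∧ (b - c)^2 + (b + c - 2*a - 2*d)^2 ≠ 0) ∨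
       (lam = 0 ∧ 0 < mu ∧ d ≠ 0) ∨
       (mu = 0 ∧ 0 < lam ∧ (b - c)^2 + d^2 ≠ 0)) ∧
      stab K S = {g | matrixOf e g ∈ z2MatSet} := by
  obtain ⟨g, hg1, hgg, hstab⟩ := hcyc
  have hg : g ∈ stab K S := by rw [hstab]; simp
  obtain ⟨e₀, he₀⟩ := exists_adapted g hg1 (fun x => by
    simpa using congrArg (fun f : V₃ ≃ₗᵢ[ℝ] V₃ => f x) hgg) hg.1
  have hSs : ∀ X Y, ⟪S X, Y⟫ = ⟪S Y, X⟫ := fun X Y => by rw [hS, real_inner_comm]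
  -- Every element of the stabilizer fixes the axis of an adapted basis and maps `e 1` to `± e 1`.
  have key : ∀ e, Adapted g e → ∀ T ∈ stab K S,
      T (e 0) = e 0 ∧ (T (e 1) = e 1 ∨ T (e 1) = -e 1) := by
    intro e he T hT
    rw [hstab] at hT
    rcases hT with rfl | hT
    · simp
    · rw [Set.mem_singleton_iff.1 hT]
      exact ⟨he.1, Or.inr he.2.1⟩
  have hform : ∃ e, Adapted g e ∧ ∃ lam mu a b c d : ℝ, 0 ≤ lam ∧ 0 ≤ mu ∧
      Z2Form K S e lam mu a b c d := by
    obtain ⟨e, he, h0, hd⟩ := exists_equal_diag he₀ (K (e₀ 0)) (hK.2.1 (e₀ 0))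
    rw [← h0] at hd
    obtain ⟨lam, mu, a, b, c, d, hZ, -⟩ := exists_form hK hS hg he hd
    obtain ⟨e', he', lam', mu', d', hl, hm, hZ'⟩ := exists_form_nonneg he hZ
    exact ⟨e', he', lam', mu', a, b, c, d', hl, hm, hZ'⟩
  obtain ⟨e, he, lam, mu, a, b, c, d, hl, hm, hZ⟩ := hform
  refine ⟨e, lam, mu, a, b, c, d, hZ, ?_, ?_⟩
  · have hlam0 : lam = 0 → d ≠ 0 := by
      rintro rfl rfl
      obtain ⟨T, hT, hne⟩ := exists_stab_lam_zero hK hZ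
      exact hne (key e he T hT).1
    have hmu0 : mu = 0 → (b - c) ^ 2 + d ^ 2 ≠ 0 := by
      rintro rfl hbc
      have hd : d = 0 := by nlinarith [sq_nonneg (b - c), sq_nonneg d]
      have hb : b = c := by nlinarith [sq_nonneg (b - c), sq_nonneg d]
      subst hd hb
      obtain ⟨T, hT, h12⟩ := exists_stab_mu_zero hK hZ
      rcases (key e he T hT).2 with h | h
      all_goals
        have := congrArg (fun x => ⟪e 2, x⟫) (h12.symm.trans h)
        simp at this
    have heq : lam = mu → (b - c) ^ 2 + (b + c - 2 * a - 2 * d) ^ 2 ≠ 0 := by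
      rintro rfl hbc
      have hb : b = c := by nlinarith [sq_nonneg (b - c), sq_nonneg (b + c - 2 * a - 2 * d)]
      have hd : b + c - 2 * a - 2 * d = 0 := by
        nlinarith [sq_nonneg (b - c), sq_nonneg (b + c - 2 * a - 2 * d)]
      obtain rfl : b = a + d := by linarith
      subst hb
      obtain ⟨T, hT, hne⟩ := exists_stab_lam_eq_mu hK hZ
      exact hne (key e he T hT).1
    -- If `K = 0`, an adapted basis diagonalizing `S` exhibits an additional half-turn.
    have hnz : ¬ (lam = 0 ∧ mu = 0) := by
      rintro ⟨rfl, rfl⟩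
      have hK0 : ∀ X Y, K X Y = 0 := by
        intro X Y
        obtain ⟨k00, k01, k02, k11, k12, k22, -⟩ := hZ
        have k10 := (hK.1 (e 1) (e 0)).trans k01
        have k20 := (hK.1 (e 2) (e 0)).trans k02
        have k21 := (hK.1 (e 2) (e 1)).trans k12
        rw [expand e X, expand e Y]
        simp [k00, k01, k02, k10, k11, k12, k20, k21, k22]
      obtain ⟨e', he', -, hoff⟩ := exists_offdiag_zero he S hSs
      obtain ⟨l', m', a', b', c', d', hZ', hd'⟩ :=
        exists_form hK hS hg he' (by simp [hK0])
      rw [hoff] at hd'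
      subst hd'
      have hl' : l' = 0 := by
        have := congrArg (fun x => ⟪e' 0, x⟫) hZ'.1
        rw [hK0] at this
        simpa [real_inner_smul_right] using this
      subst hl'
      obtain ⟨T, hT, hne⟩ := exists_stab_lam_zero hK hZ'
      exact hne (key e' he' T hT).1
    rcases hl.eq_or_lt with h | hl'
    · have hmpos : 0 < mu := lt_of_le_of_ne hm fun h' => hnz ⟨h.symm, h'.symm⟩
      exact Or.inr (Or.inr (Or.inl ⟨h.symm, hmpos, hlam0 h.symm⟩))
    rcases hm.eq_or_lt with h | hm'
    · exact Or.inr (Or.inr (Or.inr ⟨h.symm, hl', hmu0 h.symm⟩))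
    by_cases h : lam = mu
    · exact Or.inr (Or.inl ⟨h, hl', heq h⟩)
    · exact Or.inl ⟨hl', hm', h⟩
  · rw [hstab]
    ext f
    simp only [Set.mem_insert_iff, Set.mem_singleton_iff, Set.mem_ofPred_eq, z2MatSet]
    rw [← matrixOf_one e, ← matrixOf_adapted he, (matrixOf_injective e).eq_iff,
      (matrixOf_injective e).eq_iff]
end
end

section
/- Suppose the stabilizer G of (K,S) in SO(3) is finite and not cyclic. Then there exists an orthonormal basis {e₁,e₂,e₃} of V such that one of the following holds: (i) (K,S) is in orthogonal-triple canonical form with parameters (λ,a,b,c), where a, b, c are not all equal if λ > 0 and a, b, c are pairwise distinct if λ = 0, and G = {id, P₁, P₂, P₃}; (ii) (K,S) is in S₃-canonical form with parameters (λ,a,b) with λ > 0, and G is the order-6 group generated by P₁ and R₃; (iii) (K,S) is in orthogonal-triple canonical form with parameters (λ,a,a,a) with λ > 0 (so S = aI), and G is the order-12 group generated by P₁, P₂ and Q. -/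
/-!
A linear isometry preserves `(K,S)` exactly when it preserves the cubic form `h(K(X,X),X)` and the
quadratic form `h(SX,X)`, so everything reduces to polynomial identities in coordinates
(`mem_stab_of_forms`). Every rotation has an axis (`exists_axis`), and the stabilizer falls under one
of two alternatives.

Some stabilizing rotation has an angle that is not a multiple of `π`. Decomposing the tensors
into weights under rotations about its axis, the weights `1` and `2` must vanish (`rot_form`). The
weight-`3` part cannot vanish either, since otherwise all rotations about the axis would stabilize
and the group would be infinite. A rotation of the basis about the axis then gives the
`Z₃`-canonical form with parameters `(λ,μ,a,b)`, `μ > 0` (`exists_Z3Form`). If `λ = 0`, this is the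
`S₃` form up to relabelling the basis. If `μ² = 2λ²` and `a = b`, the cubic form is a multiple of
`xyz` in another orthonormal basis, which is the tetrahedral case. Otherwise one of the invariant
quadratic forms `h(SX,X)` and `tr (K_X ∘ K_X)` singles out the axis, its direction is fixed because
`λ ≠ 0`, and the stabilizer is cyclic of order three (`Z3_conclusion`).

If there is no such rotation, every stabilizing rotation is an involution, so the group is
abelian. It is not cyclic, hence contains two distinct commuting half-turns, whose orthogonal axes
give a basis in which the orthogonal-triple form holds. The stated parameter restrictions express
that neither `Q` nor a circle of rotations belongs to the stabilizer (`klein_conclusion`).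
-/

/-!
Setting (affine hypersurfaces admitting a pointwise symmetry, algebraic part):
`V₃ = ℝ³` with its standard inner product `h = ⟪·,·⟫`.  `K` is a symmetric bilinear
map `V₃ × V₃ → V₃` whose cubic form `h(K(X,Y),Z)` is totally symmetric and which
satisfies the apolarity condition (`K_X` trace-free), `S` is an `h`-symmetric
endomorphism.  `stab K S` is the stabilizer of the pair `(K,S)` inside `SO(3)`.
-/

noncomputable section

open scoped RealInnerProductSpace

/-! ### Coordinates and rotations in an orthonormal basis -/

lemma expand3 (e : OrthonormalBasis (Fin 3) ℝ V₃) (v : V₃) :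
    v = ⟪e 0, v⟫ • e 0 + ⟪e 1, v⟫ • e 1 + ⟪e 2, v⟫ • e 2 := by
  have := e.sum_repr' v
  rw [Fin.sum_univ_three] at this
  exact this.symm

lemma ext3 (e : OrthonormalBasis (Fin 3) ℝ V₃) {v w : V₃} (h0 : ⟪v, e 0⟫ = ⟪w, e 0⟫)
    (h1 : ⟪v, e 1⟫ = ⟪w, e 1⟫) (h2 : ⟪v, e 2⟫ = ⟪w, e 2⟫) : v = w := by
  rw [expand3 e v, expand3 e w, real_inner_comm, h0, real_inner_comm v, h1, real_inner_comm v, h2]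
  simp only [real_inner_comm]

lemma inner_basis (e : OrthonormalBasis (Fin 3) ℝ V₃) (i j : Fin 3) :
    ⟪e i, e j⟫ = if i = j then 1 else 0 :=
  orthonormal_iff_ite.mp e.orthonormal i j

/-- Orthonormality of a triple of vectors, spelled out, gives an orthonormal basis. -/
lemma exists_basis (v : Fin 3 → V₃) (h00 : ⟪v 0, v 0⟫ = 1) (h11 : ⟪v 1, v 1⟫ = 1)
    (h22 : ⟪v 2, v 2⟫ = 1) (h01 : ⟪v 0, v 1⟫ = 0) (h02 : ⟪v 0, v 2⟫ = 0) (h12 : ⟪v 1, v 2⟫ = 0) :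
    ∃ f : OrthonormalBasis (Fin 3) ℝ V₃, f 0 = v 0 ∧ f 1 = v 1 ∧ f 2 = v 2 := by
  have hv : Orthonormal ℝ v := by
    rw [orthonormal_iff_ite]
    intro i j
    have h10 : ⟪v 1, v 0⟫ = 0 := by rw [real_inner_comm, h01]
    have h20 : ⟪v 2, v 0⟫ = 0 := by rw [real_inner_comm, h02]
    have h21 : ⟪v 2, v 1⟫ = 0 := by rw [real_inner_comm, h12]
    fin_cases i <;> fin_cases j
    · simpa using h00
    · simpa using h01
    · simpa using h02
    · simpa using h10
    · simpa using h11
    · simpa using h12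
    · simpa using h20
    · simpa using h21
    · simpa using h22
  have hsp : ⊤ ≤ Submodule.span ℝ (Set.range v) := by
    rw [hv.linearIndependent.span_eq_top_of_card_eq_finrank' (by simp)]
  exact ⟨OrthonormalBasis.mk hv hsp, by simp⟩

lemma apply_basis (e : OrthonormalBasis (Fin 3) ℝ V₃) (g : V₃ ≃ₗᵢ[ℝ] V₃) (j : Fin 3) :
    g (e j) = matrixOf e g 0 j • e 0 + matrixOf e g 1 j • e 1 + matrixOf e g 2 j • e 2 :=
  expand3 e _

lemma inner_apply (e : OrthonormalBasis (Fin 3) ℝ V₃) (g : V₃ ≃ₗᵢ[ℝ] V₃) (i : Fin 3) (X : V₃) :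
    ⟪e i, g X⟫ = matrixOf e g i 0 * ⟪e 0, X⟫ + matrixOf e g i 1 * ⟪e 1, X⟫
      + matrixOf e g i 2 * ⟪e 2, X⟫ := by
  conv_lhs => rw [expand3 e X]
  simp only [map_add, map_smul, inner_add_right, inner_smul_right, matrixOf, Matrix.of_apply]
  ring

lemma matrixOf_mul (e : OrthonormalBasis (Fin 3) ℝ V₃) (g h : V₃ ≃ₗᵢ[ℝ] V₃) :
    matrixOf e (g * h) = matrixOf e g * matrixOf e h := by
  ext i j
  rw [Matrix.mul_apply, Fin.sum_univ_three]
  exact inner_apply e g i (h (e j))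

lemma matrixOf_injective_s3 (e : OrthonormalBasis (Fin 3) ℝ V₃) {g h : V₃ ≃ₗᵢ[ℝ] V₃}
    (H : matrixOf e g = matrixOf e h) : g = h := by
  ext1 X
  apply ext3 e <;> simp only [real_inner_comm (e _)] <;> rw [inner_apply, inner_apply, H]

lemma matrixOf_orth (e : OrthonormalBasis (Fin 3) ℝ V₃) (g : V₃ ≃ₗᵢ[ℝ] V₃) :
    (matrixOf e g).transpose * matrixOf e g = 1 := by
  ext i j
  rw [Matrix.mul_apply, Fin.sum_univ_three, Matrix.one_apply, ← inner_basis e,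
    ← g.inner_map_map (e i), apply_basis e g i]
  simp [inner_add_left, inner_smul_left, matrixOf]

lemma det_matrixOf (e : OrthonormalBasis (Fin 3) ℝ V₃) (g : V₃ ≃ₗᵢ[ℝ] V₃) :
    (matrixOf e g).det = LinearMap.det (g.toLinearEquiv : V₃ →ₗ[ℝ] V₃) := by
  rw [← LinearMap.det_toMatrix e.toBasis]
  congr 1
  ext i j
  simp [LinearMap.toMatrix_apply, matrixOf, OrthonormalBasis.repr_apply_apply]

lemma exists_isometry (e : OrthonormalBasis (Fin 3) ℝ V₃) (M : Matrix (Fin 3) (Fin 3) ℝ)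
    (hM : M.transpose * M = 1) : ∃ g : V₃ ≃ₗᵢ[ℝ] V₃, matrixOf e g = M := by
  have H : ∀ i j, M 0 i * M 0 j + M 1 i * M 1 j + M 2 i * M 2 j = if i = j then 1 else 0 := by
    intro i j
    have := congrFun (congrFun hM i) j
    rw [Matrix.mul_apply, Fin.sum_univ_three, Matrix.one_apply] at this
    exact this
  have key : ∀ i j, ⟪M 0 i • e 0 + M 1 i • e 1 + M 2 i • e 2,
      M 0 j • e 0 + M 1 j • e 1 + M 2 j • e 2⟫ = if i = j then (1:ℝ) else 0 := by
    intro i j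
    rw [← H]
    simp [inner_add_left, inner_add_right, inner_smul_left, inner_smul_right]
    ring
  obtain ⟨f, h0, h1, h2⟩ := exists_basis (fun j => M 0 j • e 0 + M 1 j • e 1 + M 2 j • e 2)
    (key 0 0) (key 1 1) (key 2 2) (key 0 1) (key 0 2) (key 1 2)
  refine ⟨e.equiv f (Equiv.refl _), ?_⟩
  ext i j
  have hf : f j = M 0 j • e 0 + M 1 j • e 1 + M 2 j • e 2 := by
    fin_cases j <;> assumption
  simp only [matrixOf, Matrix.of_apply, OrthonormalBasis.equiv_apply_basis, Equiv.refl_apply, hf]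
  fin_cases i <;> simp [inner_add_right, inner_smul_right]

/-- Every rotation of `ℝ³` has an axis: `det (M - 1) = 0` for `M ∈ SO(3)`. -/
lemma exists_axis (g : V₃ ≃ₗᵢ[ℝ] V₃)
    (hg : LinearMap.det (g.toLinearEquiv : V₃ →ₗ[ℝ] V₃) = 1) :
    ∃ (e : OrthonormalBasis (Fin 3) ℝ V₃) (θ : ℝ), matrixOf e g = rotMat θ := by
  have hdet : (matrixOf stdB g - 1).det = 0 := by
    have h1 : (matrixOf stdB g).transpose * (matrixOf stdB g - 1)
        = -(matrixOf stdB g - 1).transpose := by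
      rw [Matrix.mul_sub, matrixOf_orth]
      simp
    have h2 := congrArg Matrix.det h1
    rw [Matrix.det_mul, Matrix.det_transpose, det_matrixOf, hg, Matrix.det_neg,
      Matrix.det_transpose] at h2
    norm_num at h2
    linarith
  obtain ⟨w, hw0, hw⟩ := Matrix.exists_mulVec_eq_zero_iff.mpr hdet
  have hw' : (matrixOf stdB g).mulVec w = w := by
    rw [Matrix.sub_mulVec, Matrix.one_mulVec, sub_eq_zero] at hw
    exact hw
  set v : V₃ := WithLp.toLp 2 w with hv
  have hv0 : v ≠ 0 := by
    intro h
    apply hw0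
    ext i
    have := congrArg (fun x : V₃ => x i) h
    simpa [hv] using this
  have hcoord : ∀ (i : Fin 3) (X : V₃), ⟪stdB i, X⟫ = X i := by
    intro i X
    simpa [stdB] using EuclideanSpace.inner_single_left i (1 : ℝ) X
  have hgv : g v = v := by
    ext i
    rw [← hcoord, inner_apply, hcoord, hcoord, hcoord]
    have := congrFun hw' i
    rw [Matrix.mulVec, dotProduct, Fin.sum_univ_three] at this
    simpa [hv] using this
  set u : V₃ := ‖v‖⁻¹ • v with hu
  have hgu : g u = u := by rw [hu, map_smul, hgv]
  have hun : ‖u‖ = 1 := by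
    rw [hu, norm_smul, norm_inv, norm_norm, inv_mul_cancel₀ (norm_ne_zero_iff.mpr hv0)]
  obtain ⟨e, he⟩ := Orthonormal.exists_orthonormalBasis_extension_of_card_eq (𝕜 := ℝ) (E := V₃)
    (ι := Fin 3) (by simp) (v := fun _ => u) (s := {0}) (by
      rw [orthonormal_iff_ite]
      intro i j
      have : i = j := Subsingleton.elim _ _
      simp [this, hun])
  have he0 : e 0 = u := he 0 rfl
  have hg0 : g (e 0) = e 0 := by rw [he0, hgu]
  refine ⟨e, ?_⟩
  have hO := matrixOf_orth e g
  have hD := det_matrixOf e g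
  rw [hg] at hD
  set M := matrixOf e g with hM
  have c0 : ∀ i, M i 0 = if i = 0 then 1 else 0 := by
    intro i
    simp [hM, matrixOf, hg0, inner_basis]
  have H : ∀ i j, M 0 i * M 0 j + M 1 i * M 1 j + M 2 i * M 2 j = if i = j then 1 else 0 := by
    intro i j
    have := congrFun (congrFun hO i) j
    rw [Matrix.mul_apply, Fin.sum_univ_three, Matrix.one_apply] at this
    exact this
  have h01 := H 0 1
  have h02 := H 0 2
  have h11 := H 1 1
  have h22 := H 2 2
  have h12 := H 1 2
  rw [Matrix.det_fin_three] at hD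
  simp [c0] at h01 h02 h11 h22 h12 hD
  simp only [h01, h02, mul_zero, zero_add] at h11 h22 h12
  have e22 : M 2 2 = M 1 1 := by grind
  have e12 : M 1 2 = - M 2 1 := by grind
  obtain ⟨θ, hc, hs⟩ : ∃ θ : ℝ, Real.cos θ = M 1 1 ∧ Real.sin θ = M 2 1 := by
    have hn : ‖(⟨M 1 1, M 2 1⟩ : ℂ)‖ = 1 := by
      rw [Complex.norm_def, Complex.normSq_mk, h11, Real.sqrt_one]
    refine ⟨Complex.arg ⟨M 1 1, M 2 1⟩, ?_, ?_⟩
    · rw [Complex.cos_arg (by intro h; simp [h] at hn), hn]; simp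
    · rw [Complex.sin_arg, hn]; simp
  refine ⟨θ, ?_⟩
  ext i j
  fin_cases i <;> fin_cases j <;> simp [rotMat, c0, h01, h02, hc, hs, e22, e12]

/-! ### The stabilizer and the invariant forms -/

/-- The stabilizer of `(K,S)` as a subgroup. -/
def stabGroup (K : V₃ →ₗ[ℝ] V₃ →ₗ[ℝ] V₃) (S : V₃ →ₗ[ℝ] V₃) : Subgroup (V₃ ≃ₗᵢ[ℝ] V₃) where
  carrier := stab K S
  one_mem' := by
    refine ⟨?_, fun X Y => rfl, fun X => rfl⟩
    exact LinearMap.det_id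
  mul_mem' := by
    rintro g h ⟨g1, g2, g3⟩ ⟨h1, h2, h3⟩
    refine ⟨?_, fun X Y => ?_, fun X => ?_⟩
    · have : ((g * h).toLinearEquiv : V₃ →ₗ[ℝ] V₃)
        = (g.toLinearEquiv : V₃ →ₗ[ℝ] V₃) ∘ₗ (h.toLinearEquiv : V₃ →ₗ[ℝ] V₃) := rfl
      rw [this, LinearMap.det_comp, g1, h1, one_mul]
    · change K (g (h X)) (g (h Y)) = g (h (K X Y))
      rw [g2, h2]
    · change S (g (h X)) = g (h (S X))
      rw [g3, h3]
  inv_mem' := by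
    rintro g ⟨g1, g2, g3⟩
    have hg : ∀ X, g (g⁻¹ X) = X := fun X => g.apply_symm_apply X
    refine ⟨?_, fun X Y => ?_, fun X => ?_⟩
    · have : (g.toLinearEquiv : V₃ →ₗ[ℝ] V₃) ∘ₗ (g⁻¹.toLinearEquiv : V₃ →ₗ[ℝ] V₃)
        = LinearMap.id := by
        ext1 X
        exact hg X
      have h2 := congrArg LinearMap.det this
      rw [LinearMap.det_comp, g1, one_mul, LinearMap.det_id] at h2
      exact h2
    · apply g.injective
      rw [← g2, hg, hg, hg]
    · apply g.injective
      rw [← g3, hg, hg]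

/-- By polarization, an isometry preserves `(K,S)` as soon as it preserves the cubic form
`h(K(X,X),X)` and the quadratic form `h(SX,X)`. -/
lemma mem_stab_of_forms {K : V₃ →ₗ[ℝ] V₃ →ₗ[ℝ] V₃} {S : V₃ →ₗ[ℝ] V₃}
    (hK : IsAdmissibleK K) (hS : IsSymmEndo S) {g : V₃ ≃ₗᵢ[ℝ] V₃}
    (hdet : LinearMap.det (g.toLinearEquiv : V₃ →ₗ[ℝ] V₃) = 1)
    (hf : ∀ X, ⟪K (g X) (g X), g X⟫ = ⟪K X X, X⟫) (hq : ∀ X, ⟪S (g X), g X⟫ = ⟪S X, X⟫) :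
    g ∈ stab K S := by
  obtain ⟨hK1, hK2, -⟩ := hK
  have pol : ∀ X Y Z : V₃, 6 * ⟪K X Y, Z⟫ = ⟪K (X + Y + Z) (X + Y + Z), X + Y + Z⟫
      - ⟪K (X + Y) (X + Y), X + Y⟫ - ⟪K (X + Z) (X + Z), X + Z⟫ - ⟪K (Y + Z) (Y + Z), Y + Z⟫
      + ⟪K X X, X⟫ + ⟪K Y Y, Y⟫ + ⟪K Z Z, Z⟫ := by
    intro X Y Z
    simp only [map_add, LinearMap.add_apply, inner_add_left, inner_add_right]
    have a1 := hK2 X Y Z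
    have a2 := hK2 Y X Z
    have a3 := hK2 Z X Y
    rw [hK1 Y X] at a2
    rw [hK1 Z X, hK1 Z Y] at a3
    rw [hK1 Y X, hK1 Z X, hK1 Z Y]
    linarith
  refine ⟨hdet, fun X Y => ?_, fun X => ?_⟩
  · refine ext_inner_right ℝ fun w => ?_
    obtain ⟨Z, rfl⟩ := g.surjective w
    rw [g.inner_map_map]
    have h1 := pol (g X) (g Y) (g Z)
    simp only [← map_add g, hf] at h1
    linarith [pol X Y Z]
  · refine ext_inner_right ℝ fun w => ?_
    obtain ⟨Y, rfl⟩ := g.surjective w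
    rw [g.inner_map_map]
    have h1 := hq (X + Y)
    simp only [map_add, inner_add_left, inner_add_right, hq] at h1
    have h2 := hS X Y
    have h3 := hS (g X) (g Y)
    linarith [real_inner_comm X (S Y), real_inner_comm (g X) (S (g Y))]

section Forms

variable {K : V₃ →ₗ[ℝ] V₃ →ₗ[ℝ] V₃} {S : V₃ →ₗ[ℝ] V₃} {e : OrthonormalBasis (Fin 3) ℝ V₃}

lemma OT_cubic (hK : IsAdmissibleK K) {lam a b c : ℝ} (h : OTForm K S e lam a b c) (X : V₃) :
    ⟪K X X, X⟫ = 6 * lam * ⟪e 0, X⟫ * ⟪e 1, X⟫ * ⟪e 2, X⟫ := by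
  obtain ⟨h1, h2, h3, h4, h5, h6, -⟩ := h
  have hX := expand3 e X
  generalize ⟪e 0, X⟫ = x at *
  generalize ⟪e 1, X⟫ = y at *
  generalize ⟪e 2, X⟫ = z at *
  rw [hX]
  simp [inner_add_left, inner_add_right, inner_smul_left, inner_smul_right, h1, h2, h3, h4, h5,
    h6, hK.1 (e 1) (e 0), hK.1 (e 2) (e 0), hK.1 (e 2) (e 1)]
  ring

lemma diag_quad {a b c : ℝ} (h : S (e 0) = a • e 0 ∧ S (e 1) = b • e 1 ∧ S (e 2) = c • e 2)
    (X : V₃) : ⟪S X, X⟫ = a * ⟪e 0, X⟫ ^ 2 + b * ⟪e 1, X⟫ ^ 2 + c * ⟪e 2, X⟫ ^ 2 := by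
  obtain ⟨h1, h2, h3⟩ := h
  have hX := expand3 e X
  generalize ⟪e 0, X⟫ = x at *
  generalize ⟪e 1, X⟫ = y at *
  generalize ⟪e 2, X⟫ = z at *
  rw [hX]
  simp [inner_add_left, inner_add_right, inner_smul_left, inner_smul_right, h1, h2, h3]
  ring

lemma Z3_cubic (hK : IsAdmissibleK K) {lam mu a b : ℝ} (h : Z3Form K S e lam mu a b) (X : V₃) :
    ⟪K X X, X⟫ = lam * (2 * ⟪e 0, X⟫ ^ 3 - 3 * ⟪e 0, X⟫ * (⟪e 1, X⟫ ^ 2 + ⟪e 2, X⟫ ^ 2))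
      + mu * (⟪e 1, X⟫ ^ 3 - 3 * ⟪e 1, X⟫ * ⟪e 2, X⟫ ^ 2) := by
  obtain ⟨h1, h2, h3, h4, h5, h6, -⟩ := h
  have hX := expand3 e X
  generalize ⟪e 0, X⟫ = x at *
  generalize ⟪e 1, X⟫ = y at *
  generalize ⟪e 2, X⟫ = z at *
  rw [hX]
  simp [inner_add_left, inner_add_right, inner_smul_left, inner_smul_right, h1, h2, h3, h4, h5,
    h6, hK.1 (e 1) (e 0), hK.1 (e 2) (e 0), hK.1 (e 2) (e 1)]
  ring

lemma S3_cubic (hK : IsAdmissibleK K) {lam a b : ℝ} (h : S3Form K S e lam a b) (X : V₃) :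
    ⟪K X X, X⟫ = lam * (⟪e 0, X⟫ ^ 3 - 3 * ⟪e 0, X⟫ * ⟪e 1, X⟫ ^ 2) := by
  obtain ⟨h1, h2, h3, h4, h5, h6, -⟩ := h
  have hX := expand3 e X
  generalize ⟪e 0, X⟫ = x at *
  generalize ⟪e 1, X⟫ = y at *
  generalize ⟪e 2, X⟫ = z at *
  rw [hX]
  simp [inner_add_left, inner_add_right, inner_smul_left, inner_smul_right, h1, h2, h3, h4, h5,
    h6, hK.1 (e 1) (e 0), hK.1 (e 2) (e 0), hK.1 (e 2) (e 1)]
  ring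

/-- The quadratic form `X ↦ tr (K_X ∘ K_X)` is invariant under the stabilizer. -/
lemma trace_invariant {g : V₃ ≃ₗᵢ[ℝ] V₃} (hg : g ∈ stab K S) (X : V₃) :
    LinearMap.trace ℝ V₃ (K (g X) ∘ₗ K (g X)) = LinearMap.trace ℝ V₃ (K X ∘ₗ K X) := by
  rw [← LinearMap.trace_conj' (K X ∘ₗ K X) g.toLinearEquiv]
  congr 1
  ext1 Y
  obtain ⟨Z, rfl⟩ := g.surjective Y
  have : g.toLinearEquiv.symm (g Z) = Z := g.symm_apply_apply Z
  simp only [LinearMap.comp_apply, hg.2.1, LinearEquiv.conj_apply_apply, this]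
  rfl

lemma Z3_trace (hK : IsAdmissibleK K) {lam mu a b : ℝ} (h : Z3Form K S e lam mu a b) (X : V₃) :
    LinearMap.trace ℝ V₃ (K X ∘ₗ K X) = 6 * lam ^ 2 * ⟪e 0, X⟫ ^ 2
      + (2 * lam ^ 2 + 2 * mu ^ 2) * (⟪e 1, X⟫ ^ 2 + ⟪e 2, X⟫ ^ 2) := by
  obtain ⟨h1, h2, h3, h4, h5, h6, -⟩ := h
  have hX := expand3 e X
  generalize ⟪e 0, X⟫ = x at *
  generalize ⟪e 1, X⟫ = y at *
  generalize ⟪e 2, X⟫ = z at *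
  rw [hX, LinearMap.trace_eq_sum_inner _ e, Fin.sum_univ_three]
  simp [inner_add_right, inner_smul_right, h1, h2, h3, h4, h5,
    h6, hK.1 (e 1) (e 0), hK.1 (e 2) (e 0), hK.1 (e 2) (e 1)]
  ring

/-- If the weight-three part `mu` vanishes, all rotations about `e 0` preserve `(K,S)`. -/
lemma infinite_of_Z3_zero (hK : IsAdmissibleK K) (hS : IsSymmEndo S) {lam a b : ℝ}
    (h : Z3Form K S e lam 0 a b) : (stab K S).Infinite := by
  have ex : ∀ θ : ℝ, ∃ g : V₃ ≃ₗᵢ[ℝ] V₃, matrixOf e g = rotMat θ := by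
    intro θ
    apply exists_isometry
    have := Real.sin_sq_add_cos_sq θ
    ext i j
    fin_cases i <;> fin_cases j <;> simp [rotMat, Matrix.mul_apply, Fin.sum_univ_three] <;>
      linarith
  choose r hr using ex
  have hmem : ∀ θ, r θ ∈ stab K S := by
    intro θ
    have hcs := Real.sin_sq_add_cos_sq θ
    apply mem_stab_of_forms hK hS
    · rw [← det_matrixOf e, hr, Matrix.det_fin_three]
      simp [rotMat]
      linarith
    · intro X
      rw [Z3_cubic hK h, Z3_cubic hK h]
      simp only [inner_apply, hr, rotMat]
      simp
      left
      left
      linear_combination (⟪e 1, X⟫ ^ 2 + ⟪e 2, X⟫ ^ 2) * hcs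
    · intro X
      have hq := h.2.2.2.2.2.2
      rw [diag_quad hq, diag_quad hq]
      simp only [inner_apply, hr, rotMat]
      simp
      linear_combination (b * (⟪e 1, X⟫ ^ 2 + ⟪e 2, X⟫ ^ 2)) * hcs
  have hinj : Set.InjOn r (Set.Icc 0 Real.pi) := by
    intro s hs t ht hst
    apply Real.injOn_cos hs ht
    have h1 := hr s
    rw [hst, hr t] at h1
    have := congrFun (congrFun h1 1) 1
    simpa [rotMat] using this.symm
  refine Set.Infinite.mono ?_ ((Set.Icc_infinite Real.pi_pos).image hinj)
  rintro _ ⟨θ, -, rfl⟩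
  exact hmem θ

end Forms

/-! ### Tensors invariant under a rotation -/

section Rotation

variable {K : V₃ →ₗ[ℝ] V₃ →ₗ[ℝ] V₃} {S : V₃ →ₗ[ℝ] V₃} {e : OrthonormalBasis (Fin 3) ℝ V₃}

/-- A nontrivial rotation of the plane has no nonzero fixed vector. -/
lemma no_fixed_vector {c s x y : ℝ} (hcs : s ^ 2 + c ^ 2 = 1) (hc : c ≠ 1)
    (h1 : c * x + s * y = x) (h2 : -s * x + c * y = y) : x = 0 ∧ y = 0 := by
  have hc' : 2 * (1 - c) ≠ 0 := by
    intro h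
    exact hc (by linarith)
  constructor
  · apply (mul_eq_zero.mp (_ : 2 * (1 - c) * x = 0)).resolve_left hc'
    linear_combination (c - 1) * h1 - s * h2 - x * hcs
  · apply (mul_eq_zero.mp (_ : 2 * (1 - c) * y = 0)).resolve_left hc'
    linear_combination (c - 1) * h2 + s * h1 - y * hcs

/-- If the stabilizer contains a rotation about `e 0` whose angle is not a multiple of `π`, the
parts of `K` and `S` of weight `1` and `2` with respect to the axis `e 0` vanish. The part of
weight `3` (coefficients `p`, `q`) vanishes too unless the angle is `±2π/3`. -/
lemma rot_form (hK : IsAdmissibleK K) (hS : IsSymmEndo S) {g : V₃ ≃ₗᵢ[ℝ] V₃}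
    (hg : g ∈ stab K S) {θ : ℝ} (hM : matrixOf e g = rotMat θ) (h1 : Real.cos θ ≠ 1)
    (h2 : Real.cos θ ≠ -1) :
    ∃ lam p q a b : ℝ, K (e 0) (e 0) = (2 * lam) • e 0 ∧
      K (e 0) (e 1) = (-lam) • e 1 ∧
      K (e 0) (e 2) = (-lam) • e 2 ∧
      K (e 1) (e 1) = (-lam) • e 0 + p • e 1 + q • e 2 ∧
      K (e 1) (e 2) = q • e 1 + (-p) • e 2 ∧
      K (e 2) (e 2) = (-lam) • e 0 + (-p) • e 1 + (-q) • e 2 ∧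
      S (e 0) = a • e 0 ∧ S (e 1) = b • e 1 ∧ S (e 2) = b • e 2 ∧
      (Real.cos θ ≠ -(1 / 2) → p = 0 ∧ q = 0) := by
  have hcs := Real.sin_sq_add_cos_sq θ
  obtain ⟨-, gK, gS⟩ := hg
  have hT : ∀ X Y Z, ⟪K (g X) (g Y), g Z⟫ = ⟪K X Y, Z⟫ := by
    intro X Y Z
    rw [gK, g.inner_map_map]
  have hQ : ∀ X Y, ⟪S (g X), g Y⟫ = ⟪S X, Y⟫ := by
    intro X Y
    rw [gS, g.inner_map_map]
  have g0 : g (e 0) = e 0 := by rw [apply_basis e, hM]; simp [rotMat]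
  have g1 : g (e 1) = Real.cos θ • e 1 + Real.sin θ • e 2 := by
    rw [apply_basis e, hM]; simp [rotMat]
  have g2 : g (e 2) = (-Real.sin θ) • e 1 + Real.cos θ • e 2 := by
    rw [apply_basis e, hM]; simp [rotMat]
  have tr : ∀ X, ⟪K X (e 0), e 0⟫ + ⟪K X (e 1), e 1⟫ + ⟪K X (e 2), e 2⟫ = 0 := by
    intro X
    have := hK.2.2 X
    rw [LinearMap.trace_eq_sum_inner _ e, Fin.sum_univ_three] at this
    simpa only [real_inner_comm] using this
  obtain ⟨hK1, hK2, -⟩ := hK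
  have s10 := hK1 (e 1) (e 0)
  have s20 := hK1 (e 2) (e 0)
  have s21 := hK1 (e 2) (e 1)
  have t010 := hK2 (e 0) (e 1) (e 0)
  have t020 := hK2 (e 0) (e 2) (e 0)
  have t021 := hK2 (e 0) (e 2) (e 1)
  have t110 := hK2 (e 1) (e 1) (e 0)
  have t120 := hK2 (e 1) (e 2) (e 0)
  have t121 := hK2 (e 1) (e 2) (e 1)
  have t220 := hK2 (e 2) (e 2) (e 0)
  have t221 := hK2 (e 2) (e 2) (e 1)
  rw [s10] at t110 t120
  rw [s20] at t220
  rw [s21] at t221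
  have tr0 := tr (e 0)
  have tr1 := tr (e 1)
  have tr2 := tr (e 2)
  rw [s10] at tr1
  rw [s20, s21] at tr2
  have w1a := hT (e 0) (e 0) (e 1)
  have w1b := hT (e 0) (e 0) (e 2)
  have w2a := hT (e 0) (e 1) (e 1)
  have w2b := hT (e 0) (e 1) (e 2)
  have w3a := hT (e 1) (e 1) (e 1)
  have w3b := hT (e 1) (e 1) (e 2)
  have q1a := hQ (e 0) (e 1)
  have q1b := hQ (e 0) (e 2)
  have q2a := hQ (e 1) (e 1)
  have q2b := hQ (e 1) (e 2)
  have q10 := (hS (e 1) (e 0)).trans (real_inner_comm _ _)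
  have q20 := (hS (e 2) (e 0)).trans (real_inner_comm _ _)
  have q21 := (hS (e 2) (e 1)).trans (real_inner_comm _ _)
  simp only [g0, g1, g2, map_add, map_smul, LinearMap.add_apply, LinearMap.smul_apply,
    inner_add_left, inner_add_right, real_inner_smul_left, real_inner_smul_right, s21]
    at w1a w1b w2a w2b w3a w3b q1a q1b q2a q2b
  simp only [t010, t020, t021, t121, t221, q21]
    at tr0 tr1 tr2 w1a w1b w2a w2b w3a w3b q1a q1b q2a q2b
  clear hM gK gS hT hQ g0 g1 g2 tr hK1 hK2
  generalize Real.cos θ = c at *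
  generalize Real.sin θ = s at *
  have hs : s ≠ 0 := by
    rintro rfl
    have : (c - 1) * (c + 1) = 0 := by linarith
    rcases mul_eq_zero.mp this with h | h
    · exact h1 (by linarith)
    · exact h2 (by linarith)
  obtain ⟨x1, x2⟩ := no_fixed_vector hcs h1 w1a w1b
  obtain ⟨y1, y2⟩ := no_fixed_vector hcs h1 q1a q1b
  -- the weight-two parts are rotated by the doubled angle
  have hcs2 : (2 * c * s) ^ 2 + (c ^ 2 - s ^ 2) ^ 2 = 1 := by
    linear_combination (s ^ 2 + c ^ 2 + 1) * hcs
  have hc2 : c ^ 2 - s ^ 2 ≠ 1 := by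
    intro h
    have : s ^ 2 = 0 := by linarith
    exact hs (pow_eq_zero_iff two_ne_zero |>.mp this)
  obtain ⟨x4, x3⟩ := no_fixed_vector (x := ⟪K (e 0) (e 1), e 1⟫ - ⟪K (e 0) (e 2), e 2⟫)
    (y := 2 * ⟪K (e 0) (e 1), e 2⟫) hcs2 hc2
    (by linear_combination 2 * w2a - (⟪K (e 0) (e 1), e 1⟫ + ⟪K (e 0) (e 2), e 2⟫) * hcs)
    (by linear_combination 2 * w2b)
  obtain ⟨y4, y3⟩ := no_fixed_vector (x := ⟪S (e 1), e 1⟫ - ⟪S (e 2), e 2⟫)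
    (y := 2 * ⟪S (e 1), e 2⟫) hcs2 hc2
    (by linear_combination 2 * q2a - (⟪S (e 1), e 1⟫ + ⟪S (e 2), e 2⟫) * hcs)
    (by linear_combination 2 * q2b)
  replace x3 : ⟪K (e 0) (e 1), e 2⟫ = 0 := by linarith
  replace y3 : ⟪S (e 1), e 2⟫ = 0 := by linarith
  replace x4 : ⟪K (e 0) (e 1), e 1⟫ = ⟪K (e 0) (e 2), e 2⟫ := by linarith
  replace y4 : ⟪S (e 1), e 1⟫ = ⟪S (e 2), e 2⟫ := by linarith
  have z1 : ⟪K (e 1) (e 2), e 2⟫ = -⟪K (e 1) (e 1), e 1⟫ := by linarith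
  have z2 : ⟪K (e 2) (e 2), e 2⟫ = -⟪K (e 1) (e 1), e 2⟫ := by linarith
  have z0 : ⟪K (e 0) (e 0), e 0⟫ = -(2 * ⟪K (e 0) (e 2), e 2⟫) := by linarith
  refine ⟨-⟪K (e 0) (e 2), e 2⟫, ⟪K (e 1) (e 1), e 1⟫, ⟪K (e 1) (e 1), e 2⟫, ⟪S (e 0), e 0⟫,
    ⟪S (e 2), e 2⟫, ?_, ?_, ?_, ?_, ?_, ?_, ?_, ?_, ?_, ?_⟩
  case refine_10 =>
    intro h3
    rw [z1, z2] at w3a w3b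
    -- the weight-three part is rotated by the tripled angle
    refine no_fixed_vector (c := c ^ 3 - 3 * c * s ^ 2) (s := 3 * c ^ 2 * s - s ^ 3) ?_ ?_ ?_ ?_
    · linear_combination ((s ^ 2 + c ^ 2) ^ 2 + (s ^ 2 + c ^ 2) + 1) * hcs
    · intro h
      have h4 : (c - 1) * (c + 1 / 2) ^ 2 = 0 := by
        linear_combination (1 / 4) * h + (3 / 4) * c * hcs
      rcases mul_eq_zero.mp h4 with h5 | h5
      · exact h1 (by linarith)
      · exact h3 (by linarith [pow_eq_zero_iff two_ne_zero |>.mp h5])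
    · linear_combination w3a
    · linear_combination w3b
  all_goals
    apply ext3 e <;> simp only [inner_add_left, real_inner_smul_left, inner_basis,
      t010, t020, t021, t110, t120, t121, t220, t221, q10, q20, q21, x1, x2, x3, x4, y1, y2, y3,
      y4, z0, z1, z2] <;> simp

end Rotation

/-! ### The `Z₃`- and `S₃`-canonical forms -/

section OrderThree

variable {K : V₃ →ₗ[ℝ] V₃ →ₗ[ℝ] V₃} {S : V₃ →ₗ[ℝ] V₃} {e : OrthonormalBasis (Fin 3) ℝ V₃}

/-- An orthogonal matrix turns an orthonormal basis into another one. -/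
lemma exists_basis_matrix (e : OrthonormalBasis (Fin 3) ℝ V₃) (M : Matrix (Fin 3) (Fin 3) ℝ)
    (hM : M.transpose * M = 1) : ∃ f : OrthonormalBasis (Fin 3) ℝ V₃,
      ∀ j, f j = M 0 j • e 0 + M 1 j • e 1 + M 2 j • e 2 := by
  obtain ⟨g, hg⟩ := exists_isometry e M hM
  refine ⟨e.map g, fun j => ?_⟩
  rw [OrthonormalBasis.map_apply, apply_basis e g j, hg]

/-- When the stabilizer is finite, a rotation in it whose angle is not a multiple of `π` forces
`(K,S)` into `Z₃`-canonical form with nonzero weight-three part `mu`. -/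
lemma exists_Z3Form (hK : IsAdmissibleK K) (hS : IsSymmEndo S) (hfin : (stab K S).Finite)
    {g : V₃ ≃ₗᵢ[ℝ] V₃} (hg : g ∈ stab K S) {θ : ℝ} (hM : matrixOf e g = rotMat θ)
    (h1 : Real.cos θ ≠ 1) (h2 : Real.cos θ ≠ -1) :
    ∃ (f : OrthonormalBasis (Fin 3) ℝ V₃) (lam mu a b : ℝ), 0 < mu ∧ Z3Form K S f lam mu a b := by
  obtain ⟨lam, p, q, a, b, k00, k01, k02, k11, k12, k22, s0, s1, s2, -⟩ :=
    rot_form hK hS hg hM h1 h2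
  -- polar coordinates of `p + iq`; rotating by a third of the argument makes `q` vanish
  obtain ⟨φ, hp, hq⟩ : ∃ φ : ℝ, p = ‖(⟨p, q⟩ : ℂ)‖ * Real.cos (3 * φ) ∧
      q = ‖(⟨p, q⟩ : ℂ)‖ * Real.sin (3 * φ) := by
    refine ⟨Complex.arg ⟨p, q⟩ / 3, ?_, ?_⟩
    · rw [mul_div_cancel₀ _ three_ne_zero, Complex.norm_mul_cos_arg]
    · rw [mul_div_cancel₀ _ three_ne_zero, Complex.norm_mul_sin_arg]
  set r := ‖(⟨p, q⟩ : ℂ)‖ with hr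
  have hr0 : 0 ≤ r := norm_nonneg _
  clear_value r
  have hcs := Real.sin_sq_add_cos_sq φ
  rw [Real.cos_three_mul] at hp
  rw [Real.sin_three_mul] at hq
  generalize Real.cos φ = c at *
  generalize Real.sin φ = s at *
  obtain ⟨f, hf⟩ := exists_basis_matrix e !![1, 0, 0; 0, c, -s; 0, s, c] (by
    ext i j
    fin_cases i <;> fin_cases j <;> simp [Matrix.mul_apply, Fin.sum_univ_three] <;> linarith)
  have f0 := hf 0
  have f1 := hf 1
  have f2 := hf 2
  simp at f0 f1 f2
  have fn : ∀ v : V₃, -(s • v) = (-s) • v := fun v => (neg_smul s v).symm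
  rw [fn] at f2
  have hZ : Z3Form K S f lam r a b := by
    refine ⟨?_, ?_, ?_, ?_, ?_, ?_, ?_, ?_, ?_⟩
    all_goals
      simp only [f0, f1, f2, map_add, map_smul, LinearMap.add_apply, LinearMap.smul_apply, k00,
        k01, k02, k11, k12, k22, s0, s1, s2, hK.1 (e 2) (e 1)]
    all_goals
      clear k00 k01 k02 k11 k12 k22 s0 s1 s2 f0 f1 f2 fn hf
      apply ext3 e <;> simp [inner_add_left, inner_smul_left] <;> grind
  refine ⟨f, lam, r, a, b, lt_of_le_of_ne hr0 ?_, hZ⟩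
  rintro rfl
  exact infinite_of_Z3_zero hK hS hZ hfin

/-- The hypotheses say that `c = cos θ` and `s = sin θ` with `cos 3θ = 1`. -/
lemma cos_three_eq_one {c s : ℝ} (hcs : c ^ 2 + s ^ 2 = 1) (h : c ^ 3 - 3 * c * s ^ 2 = 1) :
    (c = 1 ∧ s = 0) ∨ (c = -(1 / 2) ∧ s = Real.sqrt 3 / 2) ∨
      (c = -(1 / 2) ∧ s = -(Real.sqrt 3 / 2)) := by
  have h3 : Real.sqrt 3 ^ 2 = 3 := Real.sq_sqrt (by norm_num)
  have h4 : (c - 1) * (c + 1 / 2) ^ 2 = 0 := by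
    linear_combination (1 / 4) * h + (3 / 4) * c * hcs
  rcases mul_eq_zero.mp h4 with h5 | h5
  · have hc : c = 1 := by linarith
    subst hc
    left
    refine ⟨rfl, pow_eq_zero_iff two_ne_zero |>.mp (by linarith : s ^ 2 = 0)⟩
  · have hc : c = -(1 / 2) := by linarith [pow_eq_zero_iff two_ne_zero |>.mp h5]
    subst hc
    right
    have h6 : (s - Real.sqrt 3 / 2) * (s + Real.sqrt 3 / 2) = 0 := by
      linear_combination hcs - h3 / 4
    rcases mul_eq_zero.mp h6 with h7 | h7
    · left; exact ⟨rfl, by linarith⟩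
    · right; exact ⟨rfl, by linarith⟩

/-- Orthonormality of the columns of `matrixOf e g`, written out in entries. -/
lemma matrixOf_entries (e : OrthonormalBasis (Fin 3) ℝ V₃) (g : V₃ ≃ₗᵢ[ℝ] V₃) (i j : Fin 3) :
    matrixOf e g 0 i * matrixOf e g 0 j + matrixOf e g 1 i * matrixOf e g 1 j
      + matrixOf e g 2 i * matrixOf e g 2 j = if i = j then 1 else 0 := by
  have := congrFun (congrFun (matrixOf_orth e g) i) j
  rw [Matrix.mul_apply, Fin.sum_univ_three, Matrix.one_apply] at this
  exact this

/-- A stabilizing rotation preserves the kernel `ℝ e 2` of `K`, hence also the plane of `e 0` and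
`e 1`, and it permutes the three maximum directions of the cubic form in that plane. -/
lemma stab_of_S3Form (hK : IsAdmissibleK K) (hS : IsSymmEndo S) {lam a b : ℝ} (hlam : 0 < lam)
    (h : S3Form K S e lam a b) : stab K S = {g | matrixOf e g ∈ s3MatSet} := by
  have h3 : Real.sqrt 3 ^ 2 = 3 := Real.sq_sqrt (by norm_num)
  ext g
  constructor
  · intro hg
    have hD := hg.1
    rw [← det_matrixOf e, Matrix.det_fin_three] at hD
    -- `e 2` spans the kernel of `K`, so `g` maps it to a multiple of itself
    have hk : K (g (e 2)) (g (e 0)) = 0 ∧ K (g (e 2)) (g (e 1)) = 0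
        ∧ K (g (e 2)) (g (e 2)) = 0 := by
      simp [hg.2.1, hK.1 (e 2) (e 0), hK.1 (e 2) (e 1), h.2.2.2.1, h.2.2.2.2.1, h.2.2.2.2.2.1]
    have hk0 : K (g (e 2)) (e 0) = 0 := by
      have hx := expand3 e (g.symm (e 0))
      have : K (g (e 2)) (g (g.symm (e 0))) = 0 := by
        rw [hx]
        simp only [map_add, map_smul, hk.1, hk.2.1, hk.2.2, smul_zero, add_zero]
      simpa using this
    have hcub : ⟪K (g (e 0)) (g (e 0)), g (e 0)⟫ = lam := by
      rw [hg.2.1, g.inner_map_map, h.1]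
      simp [inner_smul_left]
    rw [S3_cubic hK h] at hcub
    have o00 := matrixOf_entries e g 0 0
    have o01 := matrixOf_entries e g 0 1
    have o02 := matrixOf_entries e g 0 2
    have o11 := matrixOf_entries e g 1 1
    have o12 := matrixOf_entries e g 1 2
    have o22 := matrixOf_entries e g 2 2
    have m00 : ⟪e 0, g (e 0)⟫ = matrixOf e g 0 0 := rfl
    have m10 : ⟪e 1, g (e 0)⟫ = matrixOf e g 1 0 := rfl
    rw [m00, m10] at hcub
    rw [apply_basis e g 2] at hk0
    simp only [map_add, map_smul, LinearMap.add_apply, LinearMap.smul_apply,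
      hK.1 (e 2) (e 0), hK.1 (e 1) (e 0), h.1, h.2.1, h.2.2.2.1] at hk0
    have z0 := congrArg (fun v => ⟪e 0, v⟫) hk0
    have z1 := congrArg (fun v => ⟪e 1, v⟫) hk0
    simp [inner_add_right, inner_smul_right, hlam.ne'] at z0 z1
    generalize hM : matrixOf e g = M at *
    simp [z0, z1] at o00 o01 o02 o11 o12 o22 hD
    have hc3 : M 0 0 ^ 3 - 3 * M 0 0 * M 1 0 ^ 2 = 1 := by
      apply mul_left_cancel₀ hlam.ne'
      rw [hcub, mul_one]
    have hn : M 2 2 ≠ 0 := by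
      intro h0
      simp [h0] at o22
    have z2 : M 2 0 = 0 := by
      rcases o02 with h' | h'
      · exact h'
      · exact absurd h' hn
    have z3 : M 2 1 = 0 := by
      rcases o12 with h' | h'
      · exact h'
      · exact absurd h' hn
    rw [z2] at o00 o01
    rw [z3] at o11 o01
    have e1 : M 1 1 = M 2 2 * M 0 0 := by grind
    have e0 : M 0 1 = - (M 2 2 * M 1 0) := by grind
    have hcs : M 0 0 ^ 2 + M 1 0 ^ 2 = 1 := by linarith
    have hM' : M = !![M 0 0, -(M 2 2 * M 1 0), 0; M 1 0, M 2 2 * M 0 0, 0; 0, 0, M 2 2] := by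
      ext i j
      fin_cases i <;> fin_cases j <;> simp [*]
    have hd : M 2 2 = 1 ∨ M 2 2 = -1 := by
      apply mul_self_eq_one_iff.mp
      linarith
    change matrixOf e g ∈ s3MatSet
    rw [hM, hM']
    simp only [s3MatSet, Set.mem_insert_iff, Set.mem_singleton_iff]
    rcases cos_three_eq_one hcs hc3 with ⟨h5, h6⟩ | ⟨h5, h6⟩ | ⟨h5, h6⟩ <;>
      rcases hd with h7 | h7 <;> rw [h5, h6, h7]
    · left
      ext i j
      fin_cases i <;> fin_cases j <;> simp
    · right; right; right; left
      ext i j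
      fin_cases i <;> fin_cases j <;> simp [P1mat]
    · right; left
      ext i j
      fin_cases i <;> fin_cases j <;> simp [R3mat]
    · right; right; right; right; right
      ext i j
      fin_cases i <;> fin_cases j <;> simp [R3mat, P1mat, Matrix.mul_apply, Fin.sum_univ_three]
    · right; right; left
      ext i j
      fin_cases i <;> fin_cases j <;>
        simp [R3mat, Matrix.mul_apply, Fin.sum_univ_three] <;> linarith
    · right; right; right; right; left
      ext i j
      fin_cases i <;> fin_cases j <;> simp [R3mat, P1mat, Matrix.mul_apply, Fin.sum_univ_three]
  · intro hg
    change matrixOf e g ∈ s3MatSet at hg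
    have key : ∀ g : V₃ ≃ₗᵢ[ℝ] V₃, matrixOf e g = R3mat → g ∈ stabGroup K S := by
      intro g hM
      apply mem_stab_of_forms hK hS
      · rw [← det_matrixOf e, hM, Matrix.det_fin_three]
        simp [R3mat]
        linarith
      · intro X
        rw [S3_cubic hK h, S3_cubic hK h]
        simp only [inner_apply, hM, R3mat]
        simp
        left
        grind
      · intro X
        have hq := h.2.2.2.2.2.2
        rw [diag_quad hq, diag_quad hq]
        simp only [inner_apply, hM, R3mat]
        simp
        grind
    have key' : ∀ g : V₃ ≃ₗᵢ[ℝ] V₃, matrixOf e g = P1mat → g ∈ stabGroup K S := by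
      intro g hM
      apply mem_stab_of_forms hK hS
      · rw [← det_matrixOf e, hM, Matrix.det_fin_three]
        simp [P1mat]
      · intro X
        rw [S3_cubic hK h, S3_cubic hK h]
        simp only [inner_apply, hM, P1mat]
        simp
      · intro X
        have hq := h.2.2.2.2.2.2
        rw [diag_quad hq, diag_quad hq]
        simp only [inner_apply, hM, P1mat]
        simp
    obtain ⟨ρ, hρ⟩ := exists_isometry e R3mat (by
      ext i j
      fin_cases i <;> fin_cases j <;>
        simp [R3mat, Matrix.mul_apply, Fin.sum_univ_three] <;> linarith)
    obtain ⟨σ, hσ⟩ := exists_isometry e P1mat (by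
      ext i j
      fin_cases i <;> fin_cases j <;> simp [P1mat, Matrix.mul_apply, Fin.sum_univ_three])
    have hρ' := key ρ hρ
    have hσ' := key' σ hσ
    change g ∈ stabGroup K S
    rcases hg with hg | hg | hg | hg | hg | hg
    · rw [matrixOf_injective_s3 e (hg.trans (matrixOf_one e).symm)]
      exact one_mem _
    · exact key g hg
    · rw [← hρ, ← matrixOf_mul] at hg
      rw [matrixOf_injective_s3 e hg]
      exact mul_mem hρ' hρ'
    · exact key' g hg
    · rw [← hρ, ← hσ, ← matrixOf_mul] at hg
      rw [matrixOf_injective_s3 e hg]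
      exact mul_mem hσ' hρ'
    · rw [Set.mem_singleton_iff, ← hρ, ← hσ, ← matrixOf_mul] at hg
      rw [matrixOf_injective_s3 e hg]
      exact mul_mem hρ' hσ'
end OrderThree

/-! ### The orthogonal-triple form and the group `A₄` -/

section OrthogonalTriple

variable {K : V₃ →ₗ[ℝ] V₃ →ₗ[ℝ] V₃} {S : V₃ →ₗ[ℝ] V₃} {e : OrthonormalBasis (Fin 3) ℝ V₃}

lemma mem_stab_of_klein (hK : IsAdmissibleK K) (hS : IsSymmEndo S) {lam a b c : ℝ}
    (h : OTForm K S e lam a b c) {g : V₃ ≃ₗᵢ[ℝ] V₃} (hg : matrixOf e g ∈ kleinMatSet) :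
    g ∈ stab K S := by
  have hq := h.2.2.2.2.2.2
  rcases hg with hM | hM | hM | (hM : matrixOf e g = P3mat)
  · rw [matrixOf_injective_s3 e (hM.trans (matrixOf_one e).symm)]
    exact one_mem (stabGroup K S)
  all_goals
    apply mem_stab_of_forms hK hS
    · rw [← det_matrixOf e, hM, Matrix.det_fin_three]
      simp [P1mat, P2mat, P3mat]
    · intro X
      rw [OT_cubic hK h, OT_cubic hK h]
      simp only [inner_apply, hM, P1mat, P2mat, P3mat]
      simp
    · intro X
      rw [diag_quad hq, diag_quad hq]
      simp only [inner_apply, hM, P1mat, P2mat, P3mat]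
      simp

lemma mem_stab_of_Q (hK : IsAdmissibleK K) (hS : IsSymmEndo S) {lam a : ℝ}
    (h : OTForm K S e lam a a a) {g : V₃ ≃ₗᵢ[ℝ] V₃} (hM : matrixOf e g = Qmat) :
    g ∈ stab K S := by
  have hq := h.2.2.2.2.2.2
  apply mem_stab_of_forms hK hS
  · rw [← det_matrixOf e, hM, Matrix.det_fin_three]
    simp [Qmat]
  · intro X
    rw [OT_cubic hK h, OT_cubic hK h]
    simp only [inner_apply, hM, Qmat]
    simp
    ring
  · intro X
    rw [diag_quad hq, diag_quad hq]
    simp only [inner_apply, hM, Qmat]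
    simp
    ring

lemma unit_vector_cases {x y z : ℝ} (h1 : x * y = 0) (h2 : x * z = 0) (h3 : y * z = 0)
    (h : x * x + y * y + z * z = 1) :
    ((x = 1 ∨ x = -1) ∧ y = 0 ∧ z = 0) ∨ (x = 0 ∧ (y = 1 ∨ y = -1) ∧ z = 0) ∨
      (x = 0 ∧ y = 0 ∧ (z = 1 ∨ z = -1)) := by
  rcases mul_eq_zero.mp h1 with rfl | rfl
  · rcases mul_eq_zero.mp h3 with rfl | rfl
    · right; right
      exact ⟨rfl, rfl, mul_self_eq_one_iff.mp (by linarith)⟩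
    · right; left
      exact ⟨rfl, mul_self_eq_one_iff.mp (by linarith), rfl⟩
  · rcases mul_eq_zero.mp h2 with rfl | rfl
    · right; right
      exact ⟨rfl, rfl, mul_self_eq_one_iff.mp (by linarith)⟩
    · left
      exact ⟨mul_self_eq_one_iff.mp (by linarith), rfl, rfl⟩

/-- An orthogonal matrix of determinant `1` whose columns are signed unit vectors, and whose signs
multiply to `1`, is an even permutation matrix up to signs. -/
lemma mem_a4MatSet {M : Matrix (Fin 3) (Fin 3) ℝ} (hD : M.det = 1)
    (hO : ∀ i j, M 0 i * M 0 j + M 1 i * M 1 j + M 2 i * M 2 j = if i = j then 1 else 0)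
    (hz : ∀ j, M 0 j * M 1 j = 0 ∧ M 0 j * M 2 j = 0 ∧ M 1 j * M 2 j = 0)
    (hp : (M 0 0 + M 0 1 + M 0 2) * (M 1 0 + M 1 1 + M 1 2) * (M 2 0 + M 2 1 + M 2 2) = 1) :
    M ∈ a4MatSet := by
  rw [Matrix.det_fin_three] at hD
  have o01 := hO 0 1
  have o02 := hO 0 2
  have o12 := hO 1 2
  have hc : ∀ j, ((M 0 j = 1 ∨ M 0 j = -1) ∧ M 1 j = 0 ∧ M 2 j = 0) ∨
      (M 0 j = 0 ∧ (M 1 j = 1 ∨ M 1 j = -1) ∧ M 2 j = 0) ∨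
      (M 0 j = 0 ∧ M 1 j = 0 ∧ (M 2 j = 1 ∨ M 2 j = -1)) := fun j =>
    unit_vector_cases (hz j).1 (hz j).2.1 (hz j).2.2 (by simpa using hO j j)
  have hM : M = !![M 0 0, M 0 1, M 0 2; M 1 0, M 1 1, M 1 2; M 2 0, M 2 1, M 2 2] := by
    ext i j
    fin_cases i <;> fin_cases j <;> rfl
  have c0 := hc 0
  have c1 := hc 1
  have c2 := hc 2
  clear hc hz hO
  rw [hM]
  clear hM
  generalize M 0 0 = m00 at *
  generalize M 0 1 = m01 at *
  generalize M 0 2 = m02 at *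
  generalize M 1 0 = m10 at *
  generalize M 1 1 = m11 at *
  generalize M 1 2 = m12 at *
  generalize M 2 0 = m20 at *
  generalize M 2 1 = m21 at *
  generalize M 2 2 = m22 at *
  simp only [zero_ne_one, Fin.reduceEq, if_false] at o01 o02 o12
  rcases c0 with ⟨rfl | rfl, rfl, rfl⟩ | ⟨rfl, rfl | rfl, rfl⟩ | ⟨rfl, rfl, rfl | rfl⟩ <;>
  rcases c1 with ⟨rfl | rfl, rfl, rfl⟩ | ⟨rfl, rfl | rfl, rfl⟩ | ⟨rfl, rfl, rfl | rfl⟩ <;>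
  first
  | (exfalso; revert o01; norm_num; done)
  | (rcases c2 with ⟨rfl | rfl, rfl, rfl⟩ | ⟨rfl, rfl | rfl, rfl⟩ | ⟨rfl, rfl, rfl | rfl⟩ <;>
      first
      | (exfalso; revert o02; norm_num; done)
      | (exfalso; revert o12; norm_num; done)
      | (exfalso; revert hp; norm_num; done)
      | (exfalso; revert hD; norm_num; done)
      | (simp [a4MatSet, P1mat, P2mat, P3mat, Qmat, Matrix.one_fin_three]))

/-- A stabilizing rotation permutes the solutions `± e i` of `K(X,X) = 0`, `|X| = 1`; invariance of
the cubic form at `e 0 + e 1 + e 2` and the determinant leave the twelve matrices of `A₄`. -/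
lemma stab_of_OTForm (hK : IsAdmissibleK K) (hS : IsSymmEndo S) {lam a : ℝ} (hlam : lam ≠ 0)
    (h : OTForm K S e lam a a a) : stab K S = {g | matrixOf e g ∈ a4MatSet} := by
  ext g
  constructor
  · intro hg
    have hD := hg.1
    rw [← det_matrixOf e] at hD
    refine mem_a4MatSet hD (matrixOf_entries e g) (fun j => ?_) ?_
    · have hk : K (g (e j)) (g (e j)) = 0 := by
        rw [hg.2.1]
        fin_cases j
        · simp [h.1]
        · simp [h.2.1]
        · simp [h.2.2.1]
      rw [apply_basis e g j] at hk
      generalize matrixOf e g 0 j = x at *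
      generalize matrixOf e g 1 j = y at *
      generalize matrixOf e g 2 j = z at *
      obtain ⟨h1, h2, h3, h4, h5, h6, -⟩ := h
      have z0 := congrArg (fun v => ⟪e 0, v⟫) hk
      have z1 := congrArg (fun v => ⟪e 1, v⟫) hk
      have z2 := congrArg (fun v => ⟪e 2, v⟫) hk
      simp [inner_add_right, inner_smul_right, h1, h2, h3, h4, h5,
        h6, hK.1 (e 1) (e 0), hK.1 (e 2) (e 0), hK.1 (e 2) (e 1)] at z0 z1 z2
      refine ⟨?_, ?_, ?_⟩ <;> apply mul_left_cancel₀ (mul_ne_zero two_ne_zero hlam) <;> linarith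
    · have hc : ⟪K (g (e 0 + e 1 + e 2)) (g (e 0 + e 1 + e 2)), g (e 0 + e 1 + e 2)⟫
          = 6 * lam := by
        rw [hg.2.1, g.inner_map_map, OT_cubic hK h]
        simp [inner_add_right]
      rw [OT_cubic hK h, inner_apply, inner_apply, inner_apply] at hc
      simp only [inner_add_right, inner_basis] at hc
      simp at hc
      apply mul_left_cancel₀ (mul_ne_zero (by norm_num : (6 : ℝ) ≠ 0) hlam)
      linarith
  · intro hg
    have k1 : ∀ σ : V₃ ≃ₗᵢ[ℝ] V₃, matrixOf e σ ∈ kleinMatSet → σ ∈ stabGroup K S :=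
      fun σ hσ => mem_stab_of_klein hK hS h hσ
    obtain ⟨ρ, hρ⟩ := exists_isometry e Qmat (by
      ext i j
      fin_cases i <;> fin_cases j <;> simp [Qmat, Matrix.mul_apply, Fin.sum_univ_three])
    have hρ' : ρ ∈ stabGroup K S := mem_stab_of_Q hK hS h hρ
    obtain ⟨σ₁, h₁⟩ := exists_isometry e P1mat (by
      ext i j
      fin_cases i <;> fin_cases j <;> simp [P1mat, Matrix.mul_apply, Fin.sum_univ_three])
    obtain ⟨σ₂, h₂⟩ := exists_isometry e P2mat (by
      ext i j
      fin_cases i <;> fin_cases j <;> simp [P2mat, Matrix.mul_apply, Fin.sum_univ_three])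
    obtain ⟨σ₃, h₃⟩ := exists_isometry e P3mat (by
      ext i j
      fin_cases i <;> fin_cases j <;> simp [P3mat, Matrix.mul_apply, Fin.sum_univ_three])
    have i₁ := k1 σ₁ (by simp [h₁, kleinMatSet])
    have i₂ := k1 σ₂ (by simp [h₂, kleinMatSet])
    have i₃ := k1 σ₃ (by simp [h₃, kleinMatSet])
    change g ∈ stabGroup K S
    simp only [a4MatSet, Set.mem_ofPred_eq, Set.mem_insert_iff, Set.mem_singleton_iff, ← hρ, ← h₁,
      ← h₂, ← h₃, ← matrixOf_mul, ← matrixOf_one e] at hg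
    rcases hg with hg | hg | hg | hg | hg | hg | hg | hg | hg | hg | hg | hg <;>
      rw [matrixOf_injective_s3 e hg]
    · exact one_mem _
    · exact i₁
    · exact i₂
    · exact i₃
    · exact hρ'
    · exact mul_mem hρ' hρ'
    · exact mul_mem i₁ hρ'
    · exact mul_mem i₂ hρ'
    · exact mul_mem i₃ hρ'
    · exact mul_mem (mul_mem hρ' hρ') i₁
    · exact mul_mem (mul_mem hρ' hρ') i₂
    · exact mul_mem (mul_mem hρ' hρ') i₃

end OrthogonalTriple

/-! ### Noncyclic stabilizers in `Z₃`-canonical form -/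

section Z3Case

variable {K : V₃ →ₗ[ℝ] V₃ →ₗ[ℝ] V₃} {S : V₃ →ₗ[ℝ] V₃} {e : OrthonormalBasis (Fin 3) ℝ V₃}

lemma mem_stab_of_R1 (hK : IsAdmissibleK K) (hS : IsSymmEndo S) {lam mu a b : ℝ}
    (h : Z3Form K S e lam mu a b) {g : V₃ ≃ₗᵢ[ℝ] V₃} (hM : matrixOf e g = R1mat) :
    g ∈ stab K S := by
  have h3 : Real.sqrt 3 ^ 2 = 3 := Real.sq_sqrt (by norm_num)
  have hq := h.2.2.2.2.2.2
  apply mem_stab_of_forms hK hS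
  · rw [← det_matrixOf e, hM, Matrix.det_fin_three]
    simp [R1mat]
    linarith
  · intro X
    rw [Z3_cubic hK h, Z3_cubic hK h]
    simp only [inner_apply, hM, R1mat]
    simp
    generalize ⟪e 0, X⟫ = x
    generalize ⟪e 1, X⟫ = y
    generalize ⟪e 2, X⟫ = z
    clear hM hq h
    grind
  · intro X
    rw [diag_quad hq, diag_quad hq]
    simp only [inner_apply, hM, R1mat]
    simp
    generalize ⟪e 0, X⟫ = x
    generalize ⟪e 1, X⟫ = y
    generalize ⟪e 2, X⟫ = z
    clear hM hq h
    grind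

/-- If every stabilizing rotation maps `e 0` to `± e 0`, the value `2 lam ≠ 0` of the cubic form at
`e 0` excludes the minus sign, and the value `mu ≠ 0` at `e 1` leaves only the angles
`0, ±2π/3`. So the stabilizer is generated by `R₁`. -/
lemma cyclic_of_Z3Form (hK : IsAdmissibleK K) (hS : IsSymmEndo S) {lam mu a b : ℝ}
    (h : Z3Form K S e lam mu a b) (hmu : mu ≠ 0) (hlam : lam ≠ 0)
    (hax : ∀ g ∈ stab K S, matrixOf e g 0 0 ^ 2 = 1) :
    ∃ g : V₃ ≃ₗᵢ[ℝ] V₃, stab K S = Set.range (fun n : ℤ => g ^ n) := by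
  have h3 : Real.sqrt 3 ^ 2 = 3 := Real.sq_sqrt (by norm_num)
  obtain ⟨ρ, hρ⟩ := exists_isometry e R1mat (by
    ext i j
    fin_cases i <;> fin_cases j <;>
      simp [R1mat, Matrix.mul_apply, Fin.sum_univ_three] <;> linarith)
  have hρ' : ρ ∈ stabGroup K S := mem_stab_of_R1 hK hS h hρ
  refine ⟨ρ, Set.Subset.antisymm ?_ ?_⟩
  · intro g hg
    have hD := hg.1
    rw [← det_matrixOf e, Matrix.det_fin_three] at hD
    have o00 := matrixOf_entries e g 0 0
    have o01 := matrixOf_entries e g 0 1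
    have o02 := matrixOf_entries e g 0 2
    have o11 := matrixOf_entries e g 1 1
    have o12 := matrixOf_entries e g 1 2
    have o22 := matrixOf_entries e g 2 2
    have hx := hax g hg
    have cub0 : ⟪K (g (e 0)) (g (e 0)), g (e 0)⟫ = 2 * lam := by
      rw [hg.2.1, g.inner_map_map, h.1]
      simp [inner_smul_left]
    have cub1 : ⟪K (g (e 1)) (g (e 1)), g (e 1)⟫ = mu := by
      rw [hg.2.1, g.inner_map_map, h.2.2.2.1]
      simp [inner_smul_left, inner_add_left]
    rw [Z3_cubic hK h] at cub0 cub1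
    have me : ∀ i j, ⟪e i, g (e j)⟫ = matrixOf e g i j := fun _ _ => rfl
    simp only [me] at cub0 cub1
    generalize hM : matrixOf e g = M at *
    simp at o00 o01 o02 o11 o12 o22
    have z1 : M 1 0 = 0 := by nlinarith [sq_nonneg (M 1 0), sq_nonneg (M 2 0)]
    have z2 : M 2 0 = 0 := by nlinarith [sq_nonneg (M 1 0), sq_nonneg (M 2 0)]
    simp only [z1, z2] at o01 o02 o11 o12 o22 cub0 cub1 hD
    have z0 : M 0 0 = 1 := by
      apply mul_left_cancel₀ hlam
      linear_combination cub0 / 2 - lam * M 0 0 * hx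
    simp [z0] at o01 o02 hD
    simp only [o01, o02] at o11 o12 o22 cub1
    have e22 : M 2 2 = M 1 1 := by grind
    have e12 : M 1 2 = -M 2 1 := by grind
    have hc3 : M 1 1 ^ 3 - 3 * M 1 1 * M 2 1 ^ 2 = 1 := by
      apply mul_left_cancel₀ hmu
      linear_combination cub1
    have hM' : M = !![1, 0, 0; 0, M 1 1, -M 2 1; 0, M 2 1, M 1 1] := by
      ext i j
      fin_cases i <;> fin_cases j <;> simp [*]
    rcases cos_three_eq_one (by linarith) hc3 with ⟨h5, h6⟩ | ⟨h5, h6⟩ | ⟨h5, h6⟩ <;>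
      rw [h5, h6] at hM'
    · refine ⟨0, matrixOf_injective_s3 e ?_⟩
      simp only [zpow_zero]
      rw [matrixOf_one, hM, hM', Matrix.one_fin_three]
      simp
    · refine ⟨1, matrixOf_injective_s3 e ?_⟩
      simp only [zpow_one]
      rw [hρ, hM, hM', R1mat]
    · refine ⟨2, matrixOf_injective_s3 e ?_⟩
      have : (fun n : ℤ => ρ ^ n) 2 = ρ * ρ := by
        change ρ ^ (2 : ℤ) = ρ * ρ
        rw [zpow_ofNat, pow_two]
      rw [this, matrixOf_mul, hρ, hM, hM']
      ext i j
      fin_cases i <;> fin_cases j <;>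
        simp [R1mat, Matrix.mul_apply, Fin.sum_univ_three] <;> linarith
  · rintro _ ⟨n, rfl⟩
    exact zpow_mem hρ' n

/-- If the two coefficients of a quadratic form `X ↦ p x₀² + q (x₁² + x₂²)` differ, an orthogonal
map preserving it preserves the axis `e 0`. -/
lemma axis_of_quad {p q : ℝ} (hpq : p ≠ q) (g : V₃ ≃ₗᵢ[ℝ] V₃)
    (h : p * matrixOf e g 0 0 ^ 2 + q * (matrixOf e g 1 0 ^ 2 + matrixOf e g 2 0 ^ 2) = p) :
    matrixOf e g 0 0 ^ 2 = 1 := by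
  have o00 := matrixOf_entries e g 0 0
  simp at o00
  apply mul_left_cancel₀ (sub_ne_zero.mpr hpq)
  linear_combination h - q * o00

set_option maxHeartbeats 1000000 in
/-- For `mu² = 2 lam²` and scalar `S` the cubic form is a multiple of a product of three orthogonal
linear forms. The new basis consists of unit vectors along them, which the rotation by `2π/3` about
`e 0` permutes cyclically; `ε` is the sign of `lam`. -/
lemma tetrahedral_of_Z3Form (hK : IsAdmissibleK K) {lam mu a : ℝ}
    (h : Z3Form K S e lam mu a a) (hmu : 0 < mu) (hlam : mu ^ 2 = 2 * lam ^ 2) :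
    ∃ (f : OrthonormalBasis (Fin 3) ℝ V₃) (nu : ℝ), 0 < nu ∧ OTForm K S f nu a a a := by
  obtain ⟨ε, hε, hl⟩ : ∃ ε : ℝ, ε ^ 2 = 1 ∧ lam * Real.sqrt 2 = ε * mu := by
    have h2 : Real.sqrt 2 ^ 2 = 2 := Real.sq_sqrt (by norm_num)
    refine ⟨lam * Real.sqrt 2 / mu, ?_, ?_⟩
    · rw [div_pow, mul_pow, h2, hlam]
      apply div_eq_one_iff_eq _ |>.mpr
      · ring
      · rw [← hlam]; positivity
    · field_simp
  have h2 : Real.sqrt 2 ^ 2 = 2 := Real.sq_sqrt (by norm_num)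
  have h3 : Real.sqrt 3 ^ 2 = 3 := Real.sq_sqrt (by norm_num)
  have p2 : 0 < Real.sqrt 2 := Real.sqrt_pos.mpr (by norm_num)
  have p3 : 0 < Real.sqrt 3 := Real.sqrt_pos.mpr (by norm_num)
  generalize Real.sqrt 2 = p at *
  generalize Real.sqrt 3 = t at *
  obtain ⟨f, hf⟩ := exists_basis_matrix e
    !![ε * t / 3, ε * t / 3, ε * t / 3; p * t / 3, -(p * t / 6), -(p * t / 6); 0, p / 2, -(p / 2)]
    (by
      ext i j
      fin_cases i <;> fin_cases j <;> simp [Matrix.mul_apply, Fin.sum_univ_three] <;> grind)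
  have f0 := hf 0
  have f1 := hf 1
  have f2 := hf 2
  simp only [Matrix.of_apply, Matrix.cons_val_zero, Matrix.cons_val_one, Matrix.cons_val,
    zero_smul, add_zero] at f0 f1 f2
  refine ⟨f, mu * t * p / 2, by positivity, ?_⟩
  obtain ⟨h00, h01, h02, h11, h12, h22, s0, s1, s2⟩ := h
  have hl' : lam = ε * mu * p / 2 := by linear_combination p / 2 * hl - lam / 2 * h2
  refine ⟨?_, ?_, ?_, ?_, ?_, ?_, ?_, ?_, ?_⟩
  all_goals
    simp only [f0, f1, f2, map_add, map_smul, LinearMap.add_apply, LinearMap.smul_apply, h00,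
      h01, h02, h11, h12, h22, s0, s1, s2, hK.1 (e 1) (e 0), hK.1 (e 2) (e 0), hK.1 (e 2) (e 1)]
  all_goals
    clear h00 h01 h02 h11 h12 h22 s0 s1 s2 f0 f1 f2 hf hK hl hlam
    subst hl'
    apply ext3 e <;> simp [inner_add_left, inner_smul_left] <;> grind

/-- Three outcomes for a pair in `Z₃`-canonical form with noncyclic stabilizer: `lam = 0` gives
the `S₃` form, `mu² = 2 lam²` with `S` scalar gives the tetrahedral case, and in all other cases
one of the invariant quadratic forms `h(SX,X)` and `tr (K_X ∘ K_X)` fixes the axis. -/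
lemma Z3_conclusion (hK : IsAdmissibleK K) (hS : IsSymmEndo S)
    (hnotcyc : ¬ ∃ g : V₃ ≃ₗᵢ[ℝ] V₃, stab K S = Set.range (fun n : ℤ => g ^ n))
    {lam mu a b : ℝ} (hmu : 0 < mu) (h : Z3Form K S e lam mu a b) :
    ∃ f : OrthonormalBasis (Fin 3) ℝ V₃,
      (∃ lam a b : ℝ, 0 < lam ∧ S3Form K S f lam a b ∧
        stab K S = {g | matrixOf f g ∈ s3MatSet}) ∨
      (∃ lam a : ℝ, 0 < lam ∧ OTForm K S f lam a a a ∧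
        stab K S = {g | matrixOf f g ∈ a4MatSet}) := by
  by_cases hl : lam = 0
  · subst hl
    obtain ⟨f, f0, f1, f2⟩ := exists_basis ![e 1, e 2, e 0] (by simp) (by simp) (by simp)
      (by simp) (by simp) (by simp)
    simp only [Matrix.cons_val_zero, Matrix.cons_val_one, Matrix.cons_val] at f0 f1 f2
    have hF : S3Form K S f mu b a := by
      obtain ⟨h00, h01, h02, h11, h12, h22, s0, s1, s2⟩ := h
      refine ⟨?_, ?_, ?_, ?_, ?_, ?_, ?_, ?_, ?_⟩ <;>
        simp [f0, f1, f2, h00, h01, h02, h11, h12, h22, s0, s1, s2, hK.1 (e 1) (e 0),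
          hK.1 (e 2) (e 0)]
    exact ⟨f, Or.inl ⟨mu, b, a, hmu, hF, stab_of_S3Form hK hS hmu hF⟩⟩
  by_cases hab : a = b
  · subst hab
    by_cases hm : mu ^ 2 = 2 * lam ^ 2
    · obtain ⟨f, nu, hnu, hF⟩ := tetrahedral_of_Z3Form hK h hmu hm
      exact ⟨f, Or.inr ⟨nu, a, hnu, hF, stab_of_OTForm hK hS hnu.ne' hF⟩⟩
    · refine absurd (cyclic_of_Z3Form hK hS h hmu.ne' hl fun g hg => ?_) hnotcyc
      apply axis_of_quad (p := 6 * lam ^ 2) (q := 2 * lam ^ 2 + 2 * mu ^ 2)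
      · intro h'
        exact hm (by linarith)
      · have := trace_invariant hg (e 0)
        rw [Z3_trace hK h, Z3_trace hK h] at this
        simpa [matrixOf] using this
  · refine absurd (cyclic_of_Z3Form hK hS h hmu.ne' hl fun g hg => ?_) hnotcyc
    apply axis_of_quad hab
    have hq := h.2.2.2.2.2.2
    have : ⟪S (g (e 0)), g (e 0)⟫ = ⟪S (e 0), e 0⟫ := by rw [hg.2.2, g.inner_map_map]
    rw [diag_quad hq, diag_quad hq] at this
    simp at this
    simp [matrixOf]
    linarith

end Z3Case

/-! ### Stabilizers consisting of involutions -/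

section Involutions

variable {K : V₃ →ₗ[ℝ] V₃ →ₗ[ℝ] V₃} {S : V₃ →ₗ[ℝ] V₃} {e : OrthonormalBasis (Fin 3) ℝ V₃}

lemma comm_of_involutions (hinv : ∀ g ∈ stab K S, g * g = 1) {g h : V₃ ≃ₗᵢ[ℝ] V₃}
    (hg : g ∈ stab K S) (hh : h ∈ stab K S) : g * h = h * g := by
  have hgh : g * h * (g * h) = 1 := hinv _ (mul_mem (S := Subgroup _) (s := stabGroup K S) hg hh)
  have h1 := mul_eq_one_iff_eq_inv.mp (hinv g hg)
  have h2 := mul_eq_one_iff_eq_inv.mp (hinv h hh)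
  rw [mul_eq_one_iff_eq_inv.mp hgh, mul_inv_rev, ← h1, ← h2]

lemma exists_two_involutions (hinv : ∀ g ∈ stab K S, g * g = 1)
    (hnotcyc : ¬ ∃ g : V₃ ≃ₗᵢ[ℝ] V₃, stab K S = Set.range (fun n : ℤ => g ^ n)) :
    ∃ g₁ ∈ stab K S, ∃ g₂ ∈ stab K S, g₁ ≠ 1 ∧ g₂ ≠ 1 ∧ g₂ ≠ g₁ ∧ g₁ * g₂ = g₂ * g₁ := by
  by_contra! hcon
  apply hnotcyc
  have hz : ∀ g ∈ stab K S, Set.range (fun n : ℤ => g ^ n) ⊆ stab K S := by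
    rintro g hg _ ⟨n, rfl⟩
    exact zpow_mem (S := Subgroup _) (K := stabGroup K S) hg n
  by_cases hone : ∃ g ∈ stab K S, g ≠ 1
  · obtain ⟨g, hg, hg1⟩ := hone
    refine ⟨g, Set.Subset.antisymm (fun h hh => ?_) (hz g hg)⟩
    by_cases h1 : h = 1
    · exact ⟨0, by simp [h1]⟩
    by_cases h2 : h = g
    · exact ⟨1, by simp [h2]⟩
    exact absurd (comm_of_involutions hinv hg hh) (hcon g hg h hh hg1 h1 h2)
  · push Not at hone
    refine ⟨1, Set.Subset.antisymm (fun h hh => ⟨0, by simp [hone h hh]⟩)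
      (hz 1 (one_mem (stabGroup K S)))⟩

/-- Two distinct commuting half-turns have orthogonal axes, and the axes extend to an orthonormal
basis diagonalizing both. -/
lemma exists_flip_basis {g₁ g₂ : V₃ ≃ₗᵢ[ℝ] V₃}
    (d₁ : LinearMap.det (g₁.toLinearEquiv : V₃ →ₗ[ℝ] V₃) = 1)
    (d₂ : LinearMap.det (g₂.toLinearEquiv : V₃ →ₗ[ℝ] V₃) = 1)
    (i₁ : g₁ * g₁ = 1) (i₂ : g₂ * g₂ = 1) (n₁ : g₁ ≠ 1) (n₂ : g₂ ≠ 1) (n₁₂ : g₂ ≠ g₁)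
    (hc : g₁ * g₂ = g₂ * g₁) :
    ∃ f : OrthonormalBasis (Fin 3) ℝ V₃, matrixOf f g₁ = P1mat ∧ matrixOf f g₂ = P2mat := by
  obtain ⟨e, θ, hθ⟩ := exists_axis g₁ d₁
  have hcs := Real.sin_sq_add_cos_sq θ
  have M1 : matrixOf e g₁ = P1mat := by
    have h1 := matrixOf_mul e g₁ g₁
    rw [i₁, matrixOf_one, hθ] at h1
    have h2 := congrFun (congrFun h1 1) 1
    simp [rotMat, Matrix.mul_apply, Fin.sum_univ_three] at h2
    have hs : Real.sin θ = 0 := by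
      apply pow_eq_zero_iff two_ne_zero |>.mp
      linarith
    have hcos : Real.cos θ = 1 ∨ Real.cos θ = -1 := by
      apply mul_self_eq_one_iff.mp
      rw [hs] at hcs
      linarith
    rcases hcos with h | h
    · refine absurd (matrixOf_injective_s3 e (h := 1) ?_) n₁
      rw [hθ, matrixOf_one, rotMat, h, hs, Matrix.one_fin_three]
      simp
    · rw [hθ, rotMat, h, hs, P1mat]
      simp
  have hC := congrArg (matrixOf e) hc
  have hI := congrArg (matrixOf e) i₂
  have hD := det_matrixOf e g₂
  rw [d₂, Matrix.det_fin_three] at hD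
  rw [matrixOf_mul, matrixOf_mul, M1] at hC
  rw [matrixOf_mul, matrixOf_one] at hI
  have ne1 : matrixOf e g₂ ≠ 1 := fun h =>
    n₂ (matrixOf_injective_s3 e (h.trans (matrixOf_one e).symm))
  have neP : matrixOf e g₂ ≠ P1mat := fun h => n₁₂ (matrixOf_injective_s3 e (h.trans M1.symm))
  have o00 := matrixOf_entries e g₂ 0 0
  have o11 := matrixOf_entries e g₂ 1 1
  have o12 := matrixOf_entries e g₂ 1 2
  have o22 := matrixOf_entries e g₂ 2 2
  have a1 := apply_basis e g₁
  have a2 := apply_basis e g₂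
  rw [M1] at a1
  generalize matrixOf e g₂ = M at *
  have c01 := congrFun (congrFun hC 0) 1
  have c02 := congrFun (congrFun hC 0) 2
  have c10 := congrFun (congrFun hC 1) 0
  have c20 := congrFun (congrFun hC 2) 0
  simp [P1mat, Matrix.mul_apply, Fin.sum_univ_three] at c01 c02 c10 c20
  have z01 : M 0 1 = 0 := by linarith
  have z02 : M 0 2 = 0 := by linarith
  have z10 : M 1 0 = 0 := by linarith
  have z20 : M 2 0 = 0 := by linarith
  have q11 := congrFun (congrFun hI 1) 1
  have q12 := congrFun (congrFun hI 1) 2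
  have q21 := congrFun (congrFun hI 2) 1
  have q22 := congrFun (congrFun hI 2) 2
  simp [Matrix.mul_apply, Fin.sum_univ_three, z01, z02, z10, z20] at q11 q12 q21 q22
  simp [z01, z02, z10, z20] at o00 o11 o12 o22 hD
  have hM : M = !![M 0 0, 0, 0; 0, M 1 1, M 1 2; 0, M 2 1, M 2 2] := by
    ext i j
    fin_cases i <;> fin_cases j <;> simp [z01, z02, z10, z20]
  rcases mul_self_eq_one_iff.mp o00 with h0 | h0
  · exfalso
    rw [h0] at hD
    have e22 : M 2 2 = M 1 1 := by grind
    have e12 : M 1 2 = - M 2 1 := by grind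
    rw [e12] at q11
    have zs : M 2 1 = 0 := by
      apply pow_eq_zero_iff two_ne_zero |>.mp
      linarith
    rw [zs] at q11 e12
    rw [h0, e22, zs, e12] at hM
    have : M 1 1 = 1 ∨ M 1 1 = -1 := mul_self_eq_one_iff.mp (by linarith)
    rcases this with h | h
    · apply ne1
      rw [hM, h, Matrix.one_fin_three]
      simp
    · apply neP
      rw [hM, h, P1mat]
      simp
  · rw [h0] at hD
    have e22 : M 2 2 = -M 1 1 := by grind
    have e12 : M 1 2 = M 2 1 := by grind
    -- the axis of `g₂` makes half the angle of the reflection in the plane of `e 1`, `e 2`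
    obtain ⟨c, s, hcs', hx, hy⟩ : ∃ c s : ℝ, s ^ 2 + c ^ 2 = 1 ∧ M 1 1 = c ^ 2 - s ^ 2 ∧
        M 2 1 = 2 * c * s := by
      have hn : ‖(⟨M 1 1, M 2 1⟩ : ℂ)‖ = 1 := by
        rw [Complex.norm_def, Complex.normSq_mk, o11, Real.sqrt_one]
      refine ⟨Real.cos (Complex.arg ⟨M 1 1, M 2 1⟩ / 2), Real.sin (Complex.arg ⟨M 1 1, M 2 1⟩ / 2),
        Real.sin_sq_add_cos_sq _, ?_, ?_⟩
      · rw [← Real.cos_two_mul', mul_div_cancel₀ _ two_ne_zero,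
          Complex.cos_arg (by intro h; simp [h] at hn), hn]
        simp
      · have := Real.sin_two_mul (Complex.arg ⟨M 1 1, M 2 1⟩ / 2)
        rw [mul_div_cancel₀ _ two_ne_zero, Complex.sin_arg, hn] at this
        simp only [div_one] at this
        linarith
    obtain ⟨f, hf⟩ := exists_basis_matrix e !![1, 0, 0; 0, c, -s; 0, s, c] (by
      ext i j
      fin_cases i <;> fin_cases j <;> simp [Matrix.mul_apply, Fin.sum_univ_three] <;> linarith)
    refine ⟨f, ?_, ?_⟩
    · ext i j
      have hi : matrixOf f g₁ i j = ⟪f i, g₁ (f j)⟫ := rfl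
      rw [hi, hf i, hf j]
      simp only [map_add, map_smul, a1]
      fin_cases i <;> fin_cases j <;>
        simp [P1mat, inner_add_left, inner_add_right, inner_smul_left, inner_smul_right] <;>
        linarith
    · ext i j
      have hi : matrixOf f g₂ i j = ⟪f i, g₂ (f j)⟫ := rfl
      rw [hi, hf i, hf j]
      simp only [map_add, map_smul, a2]
      clear hi hf hM a1 a2 hC hI o00 o11 o12 o22 q11 q12 q21 q22 hD c01 c02 c10 c20 ne1 neP hθ M1
      fin_cases i <;> fin_cases j <;>
        simp [P2mat, inner_add_left, inner_add_right, inner_smul_left, inner_smul_right, z01, z02,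
          z10, z20, h0, e22, e12, hx, hy] <;> grind

/-- Invariance under the half-turns about the basis vectors leaves only the mixed component
`h(K(e₁,e₂),e₃)` of the cubic form and the diagonal of `S`. -/
lemma OTForm_of_flips (hK : IsAdmissibleK K) {g₁ g₂ : V₃ ≃ₗᵢ[ℝ] V₃} (h₁ : g₁ ∈ stab K S)
    (h₂ : g₂ ∈ stab K S) (M₁ : matrixOf e g₁ = P1mat) (M₂ : matrixOf e g₂ = P2mat) :
    ∃ lam a b c : ℝ, OTForm K S e lam a b c := by
  have a0 : g₁ (e 0) = e 0 := by rw [apply_basis e, M₁]; simp [P1mat]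
  have a1 : g₁ (e 1) = -e 1 := by rw [apply_basis e, M₁]; simp [P1mat]
  have a2 : g₁ (e 2) = -e 2 := by rw [apply_basis e, M₁]; simp [P1mat]
  have b0 : g₂ (e 0) = -e 0 := by rw [apply_basis e, M₂]; simp [P2mat]
  have b1 : g₂ (e 1) = e 1 := by rw [apply_basis e, M₂]; simp [P2mat]
  have b2 : g₂ (e 2) = -e 2 := by rw [apply_basis e, M₂]; simp [P2mat]
  have t : ∀ i j k, ⟪K (g₁ (e i)) (g₁ (e j)), g₁ (e k)⟫ = ⟪K (e i) (e j), e k⟫ ∧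
      ⟪K (g₂ (e i)) (g₂ (e j)), g₂ (e k)⟫ = ⟪K (e i) (e j), e k⟫ := by
    intro i j k
    rw [h₁.2.1, h₂.2.1, g₁.inner_map_map, g₂.inner_map_map]
    exact ⟨rfl, rfl⟩
  have q : ∀ i j, ⟪S (g₁ (e i)), g₁ (e j)⟫ = ⟪S (e i), e j⟫ ∧
      ⟪S (g₂ (e i)), g₂ (e j)⟫ = ⟪S (e i), e j⟫ := by
    intro i j
    rw [h₁.2.2, h₂.2.2, g₁.inner_map_map, g₂.inner_map_map]
    exact ⟨rfl, rfl⟩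
  have h021 : ⟪K (e 0) (e 2), e 1⟫ = ⟪K (e 0) (e 1), e 2⟫ := hK.2.1 _ _ _
  have h120 : ⟪K (e 1) (e 2), e 0⟫ = ⟪K (e 0) (e 1), e 2⟫ := by
    rw [hK.2.1, hK.1 (e 1) (e 0)]
  have t000 := (t 0 0 0).2
  have t001 := (t 0 0 1).1
  have t002 := (t 0 0 2).1
  have t110 := (t 1 1 0).2
  have t111 := (t 1 1 1).1
  have t112 := (t 1 1 2).1
  have t220 := (t 2 2 0).2
  have t221 := (t 2 2 1).1
  have t222 := (t 2 2 2).1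
  have t010 := (t 0 1 0).1
  have t011 := (t 0 1 1).2
  have t020 := (t 0 2 0).1
  have t022 := (t 0 2 2).2
  have t121 := (t 1 2 1).1
  have t122 := (t 1 2 2).1
  have q01 := (q 0 1).1
  have q02 := (q 0 2).1
  have q10 := (q 1 0).1
  have q12 := (q 1 2).2
  have q20 := (q 2 0).1
  have q21 := (q 2 1).2
  simp only [a0, a1, a2, b0, b1, b2, map_neg, LinearMap.neg_apply, inner_neg_left,
    inner_neg_right, neg_neg, neg_eq_self]
    at t000 t001 t002 t110 t111 t112 t220 t221 t222 t010 t011 t020 t022 t121 t122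
      q01 q02 q10 q12 q20 q21
  refine ⟨⟪K (e 0) (e 1), e 2⟫, ⟪S (e 0), e 0⟫, ⟪S (e 1), e 1⟫, ⟪S (e 2), e 2⟫,
    ?_, ?_, ?_, ?_, ?_, ?_, ?_, ?_, ?_⟩
  all_goals
    apply ext3 e <;> simp [inner_smul_left, h021, h120, t000, t001, t002, t110, t111, t112, t220, t221,
      t222, t010, t011, t020, t022, t121, t122, q01, q02, q10, q12, q20, q21]

/-- If all elements of the noncyclic stabilizer are involutions, it is a Klein four-group. -/
lemma klein_conclusion (hK : IsAdmissibleK K) (hS : IsSymmEndo S) (hfin : (stab K S).Finite)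
    (hnotcyc : ¬ ∃ g : V₃ ≃ₗᵢ[ℝ] V₃, stab K S = Set.range (fun n : ℤ => g ^ n))
    (hinv : ∀ g ∈ stab K S, g * g = 1) :
    ∃ e : OrthonormalBasis (Fin 3) ℝ V₃, ∃ lam a b c : ℝ, OTForm K S e lam a b c ∧
        (0 < lam → ¬(a = b ∧ b = c)) ∧
        (lam = 0 → a ≠ b ∧ a ≠ c ∧ b ≠ c) ∧
        stab K S = {g | matrixOf e g ∈ kleinMatSet} := by
  obtain ⟨g₁, h₁, g₂, h₂, n₁, n₂, n₁₂, hc⟩ := exists_two_involutions hinv hnotcyc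
  obtain ⟨e, M₁, M₂⟩ := exists_flip_basis h₁.1 h₂.1 (hinv g₁ h₁) (hinv g₂ h₂) n₁ n₂ n₁₂ hc
  obtain ⟨lam, a, b, c, hF⟩ := OTForm_of_flips hK h₁ h₂ M₁ M₂
  refine ⟨e, lam, a, b, c, hF, ?_, ?_, ?_⟩
  · rintro - ⟨rfl, rfl⟩
    obtain ⟨ρ, hρ⟩ := exists_isometry e Qmat (by
      ext i j
      fin_cases i <;> fin_cases j <;> simp [Qmat, Matrix.mul_apply, Fin.sum_univ_three])
    have h1 := congrArg (matrixOf e) (hinv ρ (mem_stab_of_Q hK hS hF hρ))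
    rw [matrixOf_mul, matrixOf_one, hρ] at h1
    have := congrFun (congrFun h1 0) 0
    simp [Qmat, Matrix.mul_apply, Fin.sum_univ_three] at this
  · rintro rfl
    obtain ⟨k00, k11, k22, k01, k02, k12, s0, s1, s2⟩ := hF
    simp only [zero_smul] at k01 k02 k12
    -- with `K = 0`, a repeated eigenvalue of `S` gives a whole circle of rotations
    have key : ∀ i j k : Fin 3, i ≠ j → i ≠ k → j ≠ k → ∀ x y : ℝ, S (e i) = x • e i →
        S (e j) = y • e j → S (e k) = y • e k → False := by
      intro i j k hij hik hjk x y si sj sk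
      obtain ⟨f, f0, f1, f2⟩ := exists_basis ![e i, e j, e k] (by simp) (by simp) (by simp)
        (by simp [hij]) (by simp [hik]) (by simp [hjk])
      simp only [Matrix.cons_val_zero, Matrix.cons_val_one, Matrix.cons_val] at f0 f1 f2
      have kz : ∀ i j, K (e i) (e j) = 0 := by
        intro i j
        fin_cases i <;> fin_cases j <;>
          simp [k00, k11, k22, k01, k02, k12, hK.1 (e 1) (e 0), hK.1 (e 2) (e 0),
            hK.1 (e 2) (e 1)]
      have hZ : Z3Form K S f 0 0 x y := by
        refine ⟨?_, ?_, ?_, ?_, ?_, ?_, ?_, ?_, ?_⟩ <;> simp [f0, f1, f2, kz, si, sj, sk]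
      exact infinite_of_Z3_zero hK hS hZ hfin
    refine ⟨?_, ?_, ?_⟩
    · rintro rfl
      exact key 2 0 1 (by decide) (by decide) (by decide) c a s2 s0 s1
    · rintro rfl
      exact key 1 0 2 (by decide) (by decide) (by decide) b a s1 s0 s2
    · rintro rfl
      exact key 0 1 2 (by decide) (by decide) (by decide) a b s0 s1 s2
  · ext g
    refine ⟨fun hg => ?_, fun hg => mem_stab_of_klein hK hS hF hg⟩
    have c1 := congrArg (matrixOf e) (comm_of_involutions hinv hg h₁)
    have c2 := congrArg (matrixOf e) (comm_of_involutions hinv hg h₂)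
    rw [matrixOf_mul, matrixOf_mul, M₁] at c1
    rw [matrixOf_mul, matrixOf_mul, M₂] at c2
    have hD := hg.1
    rw [← det_matrixOf e, Matrix.det_fin_three] at hD
    have o00 := matrixOf_entries e g 0 0
    have o11 := matrixOf_entries e g 1 1
    have o22 := matrixOf_entries e g 2 2
    change matrixOf e g ∈ kleinMatSet
    generalize matrixOf e g = M at *
    have c01 := congrFun (congrFun c1 0) 1
    have c02 := congrFun (congrFun c1 0) 2
    have c10 := congrFun (congrFun c1 1) 0
    have c20 := congrFun (congrFun c1 2) 0
    have c12 := congrFun (congrFun c2 1) 2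
    have c21 := congrFun (congrFun c2 2) 1
    simp [P1mat, P2mat, Matrix.mul_apply, Fin.sum_univ_three] at c01 c02 c10 c20 c12 c21
    have z01 : M 0 1 = 0 := by linarith
    have z02 : M 0 2 = 0 := by linarith
    have z10 : M 1 0 = 0 := by linarith
    have z20 : M 2 0 = 0 := by linarith
    have z12 : M 1 2 = 0 := by linarith
    have z21 : M 2 1 = 0 := by linarith
    simp [z01, z02, z10, z20, z12, z21] at o00 o11 o22 hD
    have hM : M = !![M 0 0, 0, 0; 0, M 1 1, 0; 0, 0, M 2 2] := by
      ext i j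
      fin_cases i <;> fin_cases j <;> simp [z01, z02, z10, z20, z12, z21]
    rw [hM]
    rcases mul_self_eq_one_iff.mp o00 with h0 | h0 <;>
      rcases mul_self_eq_one_iff.mp o11 with h1 | h1 <;>
      rcases mul_self_eq_one_iff.mp o22 with h2 | h2 <;>
      rw [h0, h1, h2] at hD ⊢ <;>
      first
      | (exfalso; revert hD; norm_num; done)
      | simp [kleinMatSet, P1mat, P2mat, P3mat, Matrix.one_fin_three]

end Involutions

/-! ### The classification -/

/-- Lemma 2.3: if the stabilizer of `(K,S)` in `SO(3)` is finite and not
cyclic, then in a suitable orthonormal basis the pair `(K,S)` is in one of three canonical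
forms, with the stabilizer equal to `{id,P₁,P₂,P₃}`, `⟨P₁,R₃⟩` (order 6) or `⟨P₁,P₂,Q⟩`
(order 12) respectively. -/
theorem statement_3 (K : V₃ →ₗ[ℝ] V₃ →ₗ[ℝ] V₃) (S : V₃ →ₗ[ℝ] V₃)
    (hK : IsAdmissibleK K) (hS : IsSymmEndo S)
    (hfin : (stab K S).Finite)
    (hnotcyc : ¬ ∃ g : V₃ ≃ₗᵢ[ℝ] V₃, stab K S = Set.range (fun n : ℤ => g ^ n)) :
    ∃ e : OrthonormalBasis (Fin 3) ℝ V₃,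
      (∃ lam a b c : ℝ, OTForm K S e lam a b c ∧
        (0 < lam → ¬(a = b ∧ b = c)) ∧
        (lam = 0 → a ≠ b ∧ a ≠ c ∧ b ≠ c) ∧
        stab K S = {g | matrixOf e g ∈ kleinMatSet}) ∨
      (∃ lam a b : ℝ, 0 < lam ∧ S3Form K S e lam a b ∧
        stab K S = {g | matrixOf e g ∈ s3MatSet}) ∨
      (∃ lam a : ℝ, 0 < lam ∧ OTForm K S e lam a a a ∧
        stab K S = {g | matrixOf e g ∈ a4MatSet}) := by
  by_cases hrot : ∃ g ∈ stab K S, ∃ (e : OrthonormalBasis (Fin 3) ℝ V₃) (θ : ℝ),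
      matrixOf e g = rotMat θ ∧ Real.cos θ ≠ 1 ∧ Real.cos θ ≠ -1
  · obtain ⟨g, hg, e, θ, hM, h1, h2⟩ := hrot
    obtain ⟨f, lam, mu, a, b, hmu, hZ⟩ := exists_Z3Form hK hS hfin hg hM h1 h2
    obtain ⟨f', h⟩ := Z3_conclusion hK hS hnotcyc hmu hZ
    exact ⟨f', Or.inr h⟩
  · have hinv : ∀ g ∈ stab K S, g * g = 1 := by
      intro g hg
      obtain ⟨e, θ, hM⟩ := exists_axis g hg.1
      have hcos : Real.cos θ = 1 ∨ Real.cos θ = -1 := by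
        by_contra! hne
        exact hrot ⟨g, hg, e, θ, hM, hne⟩
      have hcs := Real.sin_sq_add_cos_sq θ
      have hsin : Real.sin θ = 0 := by
        apply pow_eq_zero_iff two_ne_zero |>.mp
        rcases hcos with h | h <;> rw [h] at hcs <;> linarith
      apply matrixOf_injective_s3 e
      rw [matrixOf_mul, matrixOf_one, hM, rotMat, hsin, Matrix.one_fin_three]
      rcases hcos with h | h <;> rw [h] <;> simp
    obtain ⟨e, h⟩ := klein_conclusion hK hS hfin hnotcyc hinv
    exact ⟨e, Or.inl h⟩
end
end
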